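/- arXiv:1410.4045 — 2 statements merged into one kernel-verified Lean document; each statement's English description precedes it below -/
import Mathlib

section
/- Let M be a C-minimal structure satisfying condition (NB), F = {f_u : u ∈ U} a nice family of functions with domain V and absorbing element e, and g : V → V a definable function with g(e) = e. Then: (1) there is a cone W with e ∈ W ⊆ V such that Δ(f_u(x), f_v(x), g(x)) holds for all u,v ∈ T_g and all x ∈ W; (2) if T_g contains more than one element and u ∈ T_g, then there is a cone W with e ∈ W ⊆ V such that C(f_z(x), f_u(x), g(x)) holds for all z ∈ U∖T_g and all x ∈ W∖{e}. -/
open FirstOrder Set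

universe u

namespace CMinPaper

variable {M : Type u}

/-- The axioms of a (dense) C-relation. -/
def IsCRelation (C : M → M → M → Prop) : Prop :=
  (∀ x y z, C x y z → C x z y) ∧
  (∀ x y z, C x y z → ¬ C y x z) ∧
  (∀ x y z w, C x y z → C x w z ∨ C w y z) ∧
  (∀ x y, x ≠ y → ∃ z, z ≠ y ∧ C x y z)

/-- A cone (open ball). -/
def IsCone (C : M → M → M → Prop) (s : Set M) : Prop :=
  ∃ a b : M, a ≠ b ∧ s = {x | C a x b}

/-- A 0-level set (closed ball). -/
def IsClosedBall (C : M → M → M → Prop) (s : Set M) : Prop :=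
  ∃ a b : M, s = {x | ¬ C x a b}

/-- A ball is a cone or a closed ball. -/
def IsBall (C : M → M → M → Prop) (s : Set M) : Prop :=
  IsCone C s ∨ IsClosedBall C s

/-- The node `a ∧ b` of the underlying tree, viewed as the closed ball
`{z | ¬ C z a b}` of `M` it determines. -/
def node (C : M → M → M → Prop) (a b : M) : Set M := {x | ¬ C x a b}

/-- `Δ(x,y,z)`. -/
def Delta (C : M → M → M → Prop) (x y z : M) : Prop := ¬ C x y z ∧ ¬ C y x z

/-- The (unary) sets which are definable by a quantifier-free formula with
parameters using only `C` and equality.  A term is either the variable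
(`Option.none`) or a parameter (`Option.some a`). -/
inductive QFDef (C : M → M → M → Prop) : Set M → Prop
  | atomC (t₁ t₂ t₃ : Option M) :
      QFDef C {x | C (t₁.getD x) (t₂.getD x) (t₃.getD x)}
  | atomEq (t₁ t₂ : Option M) : QFDef C {x | t₁.getD x = t₂.getD x}
  | compl {s : Set M} : QFDef C s → QFDef C sᶜ
  | union {s t : Set M} : QFDef C s → QFDef C t → QFDef C (s ∪ t)

/-- The ternary relation interpreting the symbol `r`. -/
def interpC (L : FirstOrder.Language.{u, u}) (M : Type u) [L.Structure M]
    (r : L.Relations 3) : M → M → M → Prop :=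
  fun a b c => Language.Structure.RelMap r ![a, b, c]

/-- `M` is C-minimal: in every elementarily equivalent structure, every
definable (with parameters) subset is quantifier-free definable using only
`C` and `=`. -/
def CMinimal (L : FirstOrder.Language.{u, u}) (M : Type u) [L.Structure M]
    (r : L.Relations 3) : Prop :=
  ∀ (N : Type u) (SN : L.Structure N),
    letI := SN
    L.ElementarilyEquivalent M N →
      ∀ s : Set N, Set.Definable₁ (univ : Set N) L s → QFDef (interpC L N r) s

/-- The (model-theoretic) algebraic closure of a set of parameters. -/
def acl (L : FirstOrder.Language.{u, u}) (M : Type u) [L.Structure M] (A : Set M) : Set M :=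
  {a | ∃ s : Set M, Set.Definable₁ A L s ∧ s.Finite ∧ a ∈ s}

/-- The Steinitz exchange property for the algebraic closure. -/
def HasExchange (L : FirstOrder.Language.{u, u}) (M : Type u) [L.Structure M] : Prop :=
  ∀ (A : Set M) (a b : M),
    a ∈ acl L M (A ∪ {b}) → a ∉ acl L M A → b ∈ acl L M (A ∪ {a})

/-- `M` is geometric: acl has the exchange property in every elementarily
equivalent structure. -/
def Geometric (L : FirstOrder.Language.{u, u}) (M : Type u) [L.Structure M] : Prop :=
  ∀ (N : Type u) (SN : L.Structure N),
    letI := SN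
    L.ElementarilyEquivalent M N → HasExchange L N

/-- `M` is trivial: in every elementarily equivalent structure the pregeometry
given by acl is trivial. -/
def TrivialGeometry (L : FirstOrder.Language.{u, u}) (M : Type u) [L.Structure M] : Prop :=
  ∀ (N : Type u) (SN : L.Structure N),
    letI := SN
    L.ElementarilyEquivalent M N →
      ∀ A : Set N, acl L N A = ⋃ a ∈ A, acl L N {a}

/-- `M` is definably maximal: every definable family of cones which is linearly
ordered by inclusion has a non-empty intersection. -/
def DefinablyMaximal (L : FirstOrder.Language.{u, u}) (M : Type u) [L.Structure M]
    (r : L.Relations 3) : Prop :=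
  ∀ (n : ℕ) (S : Set (Fin (n + 1) → M)) (P : Set (Fin n → M)),
    Set.Definable (univ : Set M) L S →
    (∀ p ∈ P, IsCone (interpC L M r) {x | Fin.snoc p x ∈ S}) →
    (∀ p ∈ P, ∀ q ∈ P,
      {x | Fin.snoc p x ∈ S} ⊆ {x | Fin.snoc q x ∈ S} ∨
        {x | Fin.snoc q x ∈ S} ⊆ {x | Fin.snoc p x ∈ S}) →
    P.Nonempty → (⋂ p ∈ P, {x | Fin.snoc p x ∈ S}).Nonempty

/-- Leaves of the underlying tree are the singletons. -/
def IsLeafSet (s : Set M) : Prop := ∃ x : M, s = {x}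

/-- The interval `(lo, hi)` of the branch `br c`, consisting of all nodes
(coded as the closed balls they determine) strictly between the endpoints.
`lo = none` denotes `-∞`; `lo = some p` denotes the node `c ∧ p`; `hi : M`
denotes the node `c ∧ hi` (the leaf `c` when `hi = c`).  The tree ordering is
reverse inclusion of balls. -/
def branchInterval (C : M → M → M → Prop) (c : M) (lo : Option M) (hi : M) :
    Set (Set M) :=
  {B | (∃ s, B = node C c s) ∧ ¬ IsLeafSet B ∧
    (∀ p ∈ lo, B ⊂ node C c p) ∧ node C c hi ⊂ B}

/-- `I` is an interval of the branch `br c`. -/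
def IsIntervalOn (C : M → M → M → Prop) (c : M) (I : Set (Set M)) : Prop :=
  ∃ (lo : Option M) (hi : M), I = branchInterval C c lo hi

/-- `I` is a bounded interval of `br c` (bounded from below and from above). -/
def IsBoundedInterval (C : M → M → M → Prop) (c : M) (I : Set (Set M)) : Prop :=
  ∃ p hi : M, I = branchInterval C c (some p) hi ∧ ¬ IsLeafSet (node C c hi)

/-- `I` is an unbounded (i.e. not bounded) interval of `br c`. -/
def IsUnboundedInterval (C : M → M → M → Prop) (c : M) (I : Set (Set M)) :
    Prop :=
  IsIntervalOn C c I ∧ ¬ IsBoundedInterval C c I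

/-- The relation on nodes coded by `S ⊆ M²` via `(s,t) ↦ (c ∧ s, d ∧ t)`. -/
def codedRel (C : M → M → M → Prop) (S : Set (Fin 2 → M)) (c d : M)
    (B B' : Set M) : Prop :=
  ∃ s t : M, ![s, t] ∈ S ∧ B = node C c s ∧ B' = node C d t

/-- `S ⊆ M²` codes a bijection between the set `I` of nodes of `br c` and the
set `J` of nodes of `br d`. -/
def CodesBijectionBetween (C : M → M → M → Prop) (S : Set (Fin 2 → M))
    (c d : M) (I J : Set (Set M)) : Prop :=
  (∀ B B', codedRel C S c d B B' → B ∈ I ∧ B' ∈ J) ∧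
  (∀ B ∈ I, ∃! B', B' ∈ J ∧ codedRel C S c d B B') ∧
  (∀ B' ∈ J, ∃! B, B ∈ I ∧ codedRel C S c d B B')

/-- Condition (NB): there is no definable bijection between a bounded interval
and an unbounded interval of branches of the underlying tree. -/
def NB (L : FirstOrder.Language.{u, u}) (M : Type u) [L.Structure M] (r : L.Relations 3) :
    Prop :=
  ∀ (c d : M) (S : Set (Fin 2 → M)), Set.Definable (univ : Set M) L S →
    ∀ I J : Set (Set M),
      IsBoundedInterval (interpC L M r) c I →
      IsUnboundedInterval (interpC L M r) d J →
      ¬ CodesBijectionBetween (interpC L M r) S c d I J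

/-- An infinite group definable in `M`: an infinite definable `G ⊆ Mⁿ`
together with a definable subset of `M^{3n}` which is the graph of a group
operation on `G`. -/
def DefinableInfiniteGroup (L : FirstOrder.Language.{u, u}) (M : Type u)
    [L.Structure M] : Prop :=
  ∃ (n : ℕ) (G : Set (Fin n → M)) (mul : (Fin n → M) → (Fin n → M) → Fin n → M)
    (one : Fin n → M) (inv : (Fin n → M) → Fin n → M),
    Set.Definable (univ : Set M) L G ∧ G.Infinite ∧
    Set.Definable (univ : Set M) L
      {t : (Fin n ⊕ (Fin n ⊕ Fin n)) → M |
        t ∘ Sum.inl ∈ G ∧ t ∘ Sum.inr ∘ Sum.inl ∈ G ∧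
          mul (t ∘ Sum.inl) (t ∘ Sum.inr ∘ Sum.inl) = t ∘ Sum.inr ∘ Sum.inr} ∧
    one ∈ G ∧ (∀ a ∈ G, ∀ b ∈ G, mul a b ∈ G) ∧
    (∀ a ∈ G, ∀ b ∈ G, ∀ c ∈ G, mul (mul a b) c = mul a (mul b c)) ∧
    (∀ a ∈ G, mul one a = a ∧ mul a one = a) ∧
    (∀ a ∈ G, inv a ∈ G ∧ mul a (inv a) = one ∧ mul (inv a) a = one)

/-- `g` is a C-isomorphism from `A` onto `B`. -/
def CIsoOn (C : M → M → M → Prop) (A B : Set M) (g : M → M) : Prop :=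
  Set.BijOn g A B ∧ ∀ x ∈ A, ∀ y ∈ A, ∀ z ∈ A, (C x y z ↔ C (g x) (g y) (g z))

/-- The relation `C_e(f,g,h)`. -/
def CeRel (C : M → M → M → Prop) (V : Set M) (e : M) (f g h : M → M) : Prop :=
  ∃ W : Set M, IsCone C W ∧ e ∈ W ∧ W ⊆ V ∧ ∀ x ∈ W \ {e}, C (f x) (g x) (h x)

/-- The relation `(¬C)_e(f,g,h)`. -/
def NCeRel (C : M → M → M → Prop) (V : Set M) (e : M) (f g h : M → M) : Prop :=
  ∃ W : Set M, IsCone C W ∧ e ∈ W ∧ W ⊆ V ∧ ∀ x ∈ W \ {e}, ¬ C (f x) (g x) (h x)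

/-- A function is definable on `V` if its graph over `V` is definable. -/
def DefinableFunOn (L : FirstOrder.Language.{u, u}) (M : Type u) [L.Structure M]
    (V : Set M) (g : M → M) : Prop :=
  Set.Definable (univ : Set M) L {t : Fin 2 → M | t 0 ∈ V ∧ g (t 0) = t 1}

/-- A nice family of functions `{f u : u ∈ U}` on the cone `V`, with absorbing
element `e`. -/
structure NiceFamily (L : FirstOrder.Language.{u, u}) (M : Type u) [L.Structure M]
    (C : M → M → M → Prop) where
  U : Set M
  V : Set M
  e : M
  f : M → M → M
  coneU : IsCone C U
  coneV : IsCone C V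
  he : e ∈ V
  definable : Set.Definable (univ : Set M) L
    {t : Fin 3 → M | t 0 ∈ U ∧ t 1 ∈ V ∧ f (t 0) (t 1) = t 2}
  auto : ∀ u ∈ U, CIsoOn C V V (f u)
  fixe : ∀ u ∈ U, f u e = e
  star : ∀ x ∈ V \ {e}, ∃ V' : Set M, V' ⊆ V ∧ IsCone C V' ∧
    CIsoOn C U V' fun u => f u x

namespace NiceFamily

variable {L : FirstOrder.Language.{u, u}} [L.Structure M] {C : M → M → M → Prop}

/-- `f u` is tangent to `g` relatively to the family. -/
def Tangent (F : NiceFamily L M C) (u : M) (g : M → M) : Prop :=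
  u ∈ F.U ∧ ∀ u' ∈ F.U, NCeRel C F.V F.e (F.f u) (F.f u') g

/-- The set `T_g` of indices of tangents to `g`. -/
def Tset (F : NiceFamily L M C) (g : M → M) : Set M := {u | F.Tangent u g}

/-- The set `Γ_{g,u}`. -/
def Gamma (F : NiceFamily L M C) (g : M → M) (u : M) : Set M :=
  {y | y ∈ F.U ∧ CeRel C F.V F.e (F.f u) (F.f y) g}

/-- `g` is derivable relatively to the family: it has exactly one tangent. -/
def Derivable (F : NiceFamily L M C) (g : M → M) : Prop := ∃! u, F.Tangent u g

/-- `f u` is non-dilating. -/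
def NonDilating (F : NiceFamily L M C) (u : M) : Prop :=
  NCeRel C F.V F.e (fun x => F.f u (F.f u x)) (F.f u) id

/-- `u₀` is an identity element for the family. -/
def HasIdentity (F : NiceFamily L M C) (u₀ : M) : Prop :=
  u₀ ∈ F.U ∧ ∀ x ∈ F.V, F.f u₀ x = x

end NiceFamily

/-- Continuity on `A` with respect to the topology generated by the cones. -/
def ContinuousOnCones (C : M → M → M → Prop) (A : Set M) (g : M → M) : Prop :=
  ∀ x ∈ A, ∀ W : Set M, IsCone C W → g x ∈ W →
    ∃ W' : Set M, IsCone C W' ∧ x ∈ W' ∧ ∀ y ∈ W' ∩ A, g y ∈ W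

/-- The consequences of the axioms of a C-relation that survive in every substructure. -/
structure CR (C : M → M → M → Prop) : Prop where
  symm : ∀ x y z, C x y z → C x z y
  asymm : ∀ x y z, C x y z → ¬ C y x z
  split : ∀ x y z w, C x y z → C x w z ∨ C w y z
  diag : ∀ x y, x ≠ y → C x y y

namespace CR

variable {C : M → M → M → Prop}

theorem of_isCRelation (h : IsCRelation C) : CR C where
  symm := h.1
  asymm := h.2.1
  split := h.2.2.1
  diag x y hxy := by
    obtain ⟨h1, h2, h3, h4⟩ := h
    obtain ⟨z, -, hz⟩ := h4 x y hxy
    rcases h3 x z y y (h1 _ _ _ hz) with h | h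
    · exact h
    · exact absurd (h1 _ _ _ h) (h2 _ _ _ (h1 _ _ _ h))

theorem irrefl (h : CR C) (x y : M) : ¬ C x x y := fun hx => h.asymm _ _ _ hx hx

theorem irrefl_right (h : CR C) (x y : M) : ¬ C x y x := fun hx => h.irrefl x y (h.symm _ _ _ hx)

theorem ne (h : CR C) {x y z : M} (hx : C x y z) : x ≠ y := by
  rintro rfl
  exact h.irrefl _ _ hx

/-- `C x · ·` is transitive. -/
theorem trans (h : CR C) {x y z t : M} (h1 : C x y z) (h2 : C x z t) : C x y t := by
  grind [h.symm, h.asymm, h.split]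

theorem mid (h : CR C) {u a b c : M} (h1 : C a b u) (h2 : C b c u) : C a c u := by
  grind [h.symm, h.asymm, h.split]

end CR

section

variable {C : M → M → M → Prop}

theorem exists_closer (hC : IsCRelation C) {s e : M} (hs : s ≠ e) : ∃ x, x ≠ e ∧ C s x e := by
  obtain ⟨z, hz, h⟩ := hC.2.2.2 s e hs
  exact ⟨z, hz, hC.1 _ _ _ h⟩

theorem node_subset_node (h : CR C) {c a b : M} : node C c a ⊆ node C c b ↔ ¬ C a b c := by
  constructor
  · intro hs hc
    have : a ∈ node C c a := fun hh => h.irrefl_right _ _ hh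
    exact hs this (h.symm _ _ _ hc)
  · intro hc x hx hxb
    simp only [node, Set.mem_ofPred_eq] at *
    grind [h.symm, h.asymm, h.split]

theorem node_ssubset_node (h : CR C) {c a b : M} : node C c a ⊂ node C c b ↔ C b a c := by
  rw [ssubset_iff_subset_not_subset, node_subset_node h, node_subset_node h, not_not]
  exact ⟨fun hh => hh.2, fun hh => ⟨fun h' => h.asymm _ _ _ (h.symm _ _ _ hh) (by
    grind [h.symm, h.asymm, h.split]), hh⟩⟩

theorem node_eq_node (h : CR C) {c a b : M} :
    node C c a = node C c b ↔ ¬ C a b c ∧ ¬ C b a c := by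
  rw [Subset.antisymm_iff, node_subset_node h, node_subset_node h]

theorem node_self (h : CR C) (c : M) : node C c c = {c} := by
  ext x
  simp only [node, Set.mem_ofPred_eq, Set.mem_singleton_iff]
  constructor
  · intro hx
    by_contra hne
    exact hx (h.diag _ _ hne)
  · rintro rfl
    exact h.irrefl _ _

theorem isLeafSet_node (h : CR C) {c s : M} : IsLeafSet (node C c s) ↔ s = c := by
  constructor
  · rintro ⟨x, hx⟩
    have h1 : s ∈ node C c s := fun hh => h.irrefl_right _ _ hh
    have h2 : c ∈ node C c s := h.irrefl _ _
    rw [hx] at h1 h2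
    exact h1.trans h2.symm
  · rintro rfl
    exact ⟨s, node_self h s⟩

theorem mem_branchInterval_some (h : CR C) {c p hi : M} {B : Set M} :
    B ∈ branchInterval C c (some p) hi ↔
      ∃ s, B = node C c s ∧ s ≠ c ∧ C p s c ∧ C s hi c := by
  constructor
  · rintro ⟨⟨s, rfl⟩, h1, h2, h3⟩
    exact ⟨s, rfl, fun hh => h1 ((isLeafSet_node h).2 hh), (node_ssubset_node h).1 (h2 p rfl),
      (node_ssubset_node h).1 h3⟩
  · rintro ⟨s, rfl, h1, h2, h3⟩
    refine ⟨⟨s, rfl⟩, fun hh => h1 ((isLeafSet_node h).1 hh), ?_, (node_ssubset_node h).2 h3⟩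
    rintro q ⟨⟩
    exact (node_ssubset_node h).2 h2

/-- The interval from a node up to the leaf of a branch is unbounded. -/
theorem isUnboundedInterval_leaf (hC : IsCRelation C) {e p : M} (hp : p ≠ e) :
    IsUnboundedInterval C e (branchInterval C e (some p) e) := by
  have h := CR.of_isCRelation hC
  refine ⟨⟨some p, e, rfl⟩, ?_⟩
  rintro ⟨q, hi, heq, hleaf⟩
  rw [isLeafSet_node h] at hleaf
  obtain ⟨x, hx, hpx⟩ : ∃ x, x ≠ e ∧ C p x e ∧ ¬ C x hi e := by
    by_cases hh : C p hi e
    · exact ⟨hi, hleaf, hh, h.irrefl _ _⟩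
    · obtain ⟨x, hx, hpx⟩ := exists_closer hC hp
      refine ⟨x, hx, hpx, ?_⟩
      grind [h.symm, h.asymm, h.split]
  have hm : node C e x ∈ branchInterval C e (some p) e :=
    (mem_branchInterval_some h).2 ⟨x, rfl, hx, hpx.1, h.diag _ _ hx⟩
  rw [heq] at hm
  exact hpx.2 ((node_ssubset_node h).1 hm.2.2.2)

/-- A set is decided by a filter if it or its complement belongs to the filter. -/
def Decided (l : Filter M) (A : Set M) : Prop := A ∈ l ∨ Aᶜ ∈ l

theorem decided_const (l : Filter M) (p : Prop) : Decided l {_x | p} := by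
  by_cases hp : p
  · exact Or.inl (Filter.Eventually.of_forall fun _ => hp)
  · exact Or.inr (Filter.Eventually.of_forall fun _ => hp)

theorem QFDef.decided (h : CR C) {l : Filter M} (hne : ∀ a, ∀ᶠ z in l, z ≠ a)
    (h1 : ∀ a b, Decided l {z | C z a b}) (h2 : ∀ a b, Decided l {z | C a z b})
    {A : Set M} (hA : QFDef C A) : Decided l A := by
  have h3 : ∀ a b, Decided l {z | C a b z} := fun a b => by
    have : {z | C a b z} = {z | C a z b} :=
      Set.ext fun z => ⟨fun hz => h.symm _ _ _ hz, fun hz => h.symm _ _ _ hz⟩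
    rw [this]
    exact h2 a b
  induction hA with
  | atomC t₁ t₂ t₃ =>
    rcases t₁ with _ | a <;> rcases t₂ with _ | b <;> rcases t₃ with _ | c <;>
      simp only [Option.getD_some, Option.getD_none]
    · exact Or.inr (Filter.Eventually.of_forall fun x => h.irrefl x x)
    · exact Or.inr (Filter.Eventually.of_forall fun x => h.irrefl x c)
    · exact Or.inr (Filter.Eventually.of_forall fun x => h.irrefl_right x b)
    · exact h1 b c
    · exact Or.inl ((hne a).mono fun z hz => h.diag _ _ hz.symm)
    · exact h2 a c
    · exact h3 a b
    · exact decided_const l _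
  | atomEq t₁ t₂ =>
    rcases t₁ with _ | a <;> rcases t₂ with _ | b <;>
      simp only [Option.getD_some, Option.getD_none]
    · exact Or.inl (Filter.Eventually.of_forall fun _ => trivial)
    · exact Or.inr (hne b)
    · exact Or.inr ((hne a).mono fun z hz => hz.symm)
    · exact decided_const l _
  | compl _ ih =>
    rcases ih with ih | ih
    · exact Or.inr (by rwa [compl_compl])
    · exact Or.inl ih
  | union _ _ ih1 ih2 =>
    rcases ih1 with ih1 | ih1
    · exact Or.inl (Filter.mem_of_superset ih1 subset_union_left)
    · rcases ih2 with ih2 | ih2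
      · exact Or.inl (Filter.mem_of_superset ih2 subset_union_right)
      · right
        rw [compl_union]
        exact Filter.inter_mem ih1 ih2

/-- A filter tending to a cut of the branch of `u` decides all quantifier-free definable sets. -/
theorem QFDef.decided_of_cut (h : CR C) {l : Filter M} (u : M)
    (hl : ∀ a, (∀ᶠ z in l, C z a u) ∨ ∀ᶠ z in l, C a z u)
    {A : Set M} (hA : QFDef C A) : Decided l A := by
  refine QFDef.decided h (fun a => ?_) (fun a b => ?_) (fun a b => ?_) hA
  · rcases hl a with ha | ha
    · exact ha.mono fun z hz => h.ne hz
    · exact ha.mono fun z hz => (h.ne hz).symm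
  · rcases hl a with ha | ha <;> rcases hl b with hb | hb
    · left; filter_upwards [ha, hb] with z h1 h2
      exact h.trans h1 (h.symm _ _ _ h2)
    · right; filter_upwards [ha, hb] with z h1 h2 h3
      simp only [Set.mem_ofPred_eq] at h3
      grind [h.symm, h.asymm, h.split]
    · right; filter_upwards [ha, hb] with z h1 h2 h3
      simp only [Set.mem_ofPred_eq] at h3
      grind [h.symm, h.asymm, h.split]
    · by_cases hu : C u a b
      · left; filter_upwards [ha, hb] with z h1 h2
        grind [h.symm, h.asymm, h.split]
      · right; filter_upwards [ha, hb] with z h1 h2 h3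
        simp only [Set.mem_ofPred_eq] at h3
        grind [h.symm, h.asymm, h.split]
  · rcases hl a with ha | ha <;> rcases hl b with hb | hb
    · right; filter_upwards [ha, hb] with z h1 h2 h3
      simp only [Set.mem_ofPred_eq] at h3
      grind [h.symm, h.asymm, h.split]
    · right; filter_upwards [ha, hb] with z h1 h2 h3
      simp only [Set.mem_ofPred_eq] at h3
      grind [h.symm, h.asymm, h.split]
    · left; filter_upwards [ha, hb] with z h1 h2
      grind [h.symm, h.asymm, h.split]
    · by_cases hu : C a u b
      · left; filter_upwards [ha, hb] with z h1 h2
        grind [h.symm, h.asymm, h.split]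
      · right; filter_upwards [ha, hb] with z h1 h2 h3
        simp only [Set.mem_ofPred_eq] at h3
        grind [h.symm, h.asymm, h.split]

/-- `N` is a strict weak order on the nonempty set `P`. -/
structure TailOrder (P : Set M) (N : M → M → Prop) : Prop where
  nonempty : P.Nonempty
  asymm : ∀ a ∈ P, ∀ b ∈ P, N a b → ¬ N b a
  split : ∀ a ∈ P, ∀ b ∈ P, ∀ c ∈ P, N a c → N a b ∨ N b c

/-- The filter generated by the final segments of `N` on `P`. -/
def tail (P : Set M) (N : M → M → Prop) : Filter M :=
  ⨅ v ∈ P, Filter.principal {x | x ∈ P ∧ N v x}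

theorem TailOrder.trans {P : Set M} {N : M → M → Prop} (h : TailOrder P N) {a b c : M}
    (ha : a ∈ P) (hb : b ∈ P) (hc : c ∈ P) (h1 : N a b) (h2 : N b c) : N a c :=
  (h.split a ha c hc b hb h1).resolve_right fun h3 => h.asymm _ hb _ hc h2 h3

theorem TailOrder.mem_tail {P : Set M} {N : M → M → Prop} (h : TailOrder P N) {A : Set M} :
    A ∈ tail P N ↔ ∃ v ∈ P, ∀ x ∈ P, N v x → x ∈ A := by
  unfold tail
  rw [Filter.mem_biInf_of_directed]
  · simp only [Filter.mem_principal]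
    exact ⟨fun ⟨v, hv, hs⟩ => ⟨v, hv, fun x hx hn => hs ⟨hx, hn⟩⟩,
      fun ⟨v, hv, hs⟩ => ⟨v, hv, fun x hx => hs x hx.1 hx.2⟩⟩
  · intro a ha b hb
    simp only [Order.Preimage, ge_iff_le, Filter.le_principal_iff, Filter.mem_principal]
    by_cases hab : N a b
    · exact ⟨b, hb, fun x hx => ⟨hx.1, h.trans ha hb hx.1 hab hx.2⟩, fun x hx => hx⟩
    · exact ⟨a, ha, fun x hx => hx,
        fun x hx => ⟨hx.1, (h.split a ha b hb x hx.1 hx.2).resolve_left hab⟩⟩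
  · exact h.nonempty

/-- The filter of punctured cone neighbourhoods of `e`. -/
def near (C : M → M → M → Prop) (e : M) : Filter M := tail {x | x ≠ e} fun y x => C y x e

theorem tailOrder_near (h : CR C) {s e : M} (hs : s ≠ e) :
    TailOrder {x | x ≠ e} fun y x => C y x e where
  nonempty := ⟨s, hs⟩
  asymm := by
    intro a _ b _ h1 h2
    exact h.asymm _ _ _ h1 h2
  split := by
    intro a _ b _ c _ h1
    rcases h.split _ _ _ b h1 with h2 | h2
    · exact Or.inl h2
    · exact Or.inr h2

theorem mem_near (h : CR C) {s e : M} (hs : s ≠ e) {A : Set M} :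
    A ∈ near C e ↔ ∃ v, v ≠ e ∧ ∀ x, x ≠ e → C v x e → x ∈ A := by
  unfold near
  rw [(tailOrder_near h hs).mem_tail]
  rfl

theorem near_neBot (hC : IsCRelation C) {s e : M} (hs : s ≠ e) : (near C e).NeBot := by
  rw [Filter.neBot_iff, ne_eq, ← Filter.empty_mem_iff_bot, mem_near (CR.of_isCRelation hC) hs]
  rintro ⟨v, hv, h⟩
  obtain ⟨x, hx, hx'⟩ := exists_closer hC hv
  exact h x hx hx'

theorem QFDef.decided_near (h : CR C) {s e : M} (hs : s ≠ e) {A : Set M} (hA : QFDef C A) :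
    Decided (near C e) A := by
  refine QFDef.decided_of_cut h e (fun a => ?_) hA
  by_cases ha : a = e
  · subst ha
    exact Or.inl ((mem_near h hs).2 ⟨s, hs, fun x hx _ => h.diag _ _ hx⟩)
  · exact Or.inr ((mem_near h hs).2 ⟨a, ha, fun x _ hx => hx⟩)

/-- The subsets containing the closed ball spanned by any of their points and `u`. -/
def BallConvex (C : M → M → M → Prop) (u : M) (D : Set M) : Prop :=
  u ∈ D ∧ ∀ y ∈ D, ∀ z, ¬ C z u y → z ∈ D

/-- A quantifier-free definable convex set is a closed ball or a cone. -/
theorem QFDef.ball_of_convex (h : CR C) {u : M} {D : Set M} (hD : QFDef C D)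
    (hc : BallConvex C u D) {b₀ : M} (hb₀ : b₀ ∉ D) :
    (∃ a ∈ D, D = {z | ¬ C z u a}) ∨ ∃ b ∉ D, D = {z | C b z u} := by
  have hsep : ∀ a ∈ D, ∀ b ∉ D, C b a u := fun a ha b hb => by
    by_contra hh
    exact hb (hc.2 a ha b fun h' => hh (h.symm _ _ _ h'))
  by_contra hcon
  push Not at hcon
  obtain ⟨hn1, hn2⟩ := hcon
  have hA : ∀ a ∈ D, ∃ z ∈ D, C z a u := by
    intro a ha
    by_contra hh
    push Not at hh
    refine hn1 a ha (Subset.antisymm (fun z hz hz' => hh z hz (h.symm _ _ _ hz')) ?_)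
    intro z hz
    exact hc.2 a ha z hz
  have hB : ∀ b ∉ D, ∃ z ∉ D, C b z u := by
    intro b hb
    by_contra hh
    push Not at hh
    refine hn2 b hb (Subset.antisymm (fun z hz => hsep z hz b hb) ?_)
    intro z hz
    by_contra hzD
    exact hh z hzD hz
  let l : Filter M := (⨅ a ∈ D, Filter.principal {z | C z a u}) ⊓
    ⨅ b ∈ Dᶜ, Filter.principal {z | C b z u}
  have hla : ∀ A ∈ l, ∃ a ∈ D, ∃ b ∉ D, ∀ z, C z a u → C b z u → z ∈ A := by
    intro A hAl
    rw [Filter.mem_inf_iff] at hAl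
    obtain ⟨s, hs, t, ht, rfl⟩ := hAl
    rw [Filter.mem_biInf_of_directed] at hs ht
    · obtain ⟨a, ha, has⟩ := hs
      obtain ⟨b, hb, hbt⟩ := ht
      exact ⟨a, ha, b, hb, fun z h1 h2 => ⟨has h1, hbt h2⟩⟩
    · intro a ha b hb
      simp only [Order.Preimage, ge_iff_le, Filter.le_principal_iff, Filter.mem_principal]
      by_cases hab : C a b u
      · exact ⟨b, hb, fun x hx => h.mid hab hx, fun x hx => hx⟩
      · refine ⟨a, ha, fun x hx => hx, fun x hx => ?_⟩
        simp only [Set.mem_ofPred_eq] at *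
        grind [h.symm, h.asymm, h.split]
    · exact ⟨b₀, hb₀⟩
    · intro a ha b hb
      simp only [Order.Preimage, ge_iff_le, Filter.le_principal_iff, Filter.mem_principal]
      by_cases hab : C a b u
      · exact ⟨a, ha, fun x hx => hx, fun x hx => h.mid hx hab⟩
      · refine ⟨b, hb, fun x hx => ?_, fun x hx => hx⟩
        simp only [Set.mem_ofPred_eq] at *
        grind [h.symm, h.asymm, h.split]
    · exact ⟨u, hc.1⟩
  have hdec : Decided l D := by
    refine QFDef.decided_of_cut h u (fun a => ?_) hD
    by_cases ha : a ∈ D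
    · exact Or.inl (Filter.mem_inf_of_left (Filter.mem_iInf_of_mem a (Filter.mem_iInf_of_mem ha
        (Filter.mem_principal_self _))))
    · exact Or.inr (Filter.mem_inf_of_right (Filter.mem_iInf_of_mem a (Filter.mem_iInf_of_mem ha
        (Filter.mem_principal_self _))))
  rcases hdec with hdec | hdec
  · obtain ⟨a, ha, b, hb, hz⟩ := hla _ hdec
    obtain ⟨z, hzD, hbz⟩ := hB b hb
    exact hzD (hz z (hsep a ha z hzD) hbz)
  · obtain ⟨a, ha, b, hb, hz⟩ := hla _ hdec
    obtain ⟨z, hzD, haz⟩ := hA a ha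
    exact hz z haz (hsep z hzD b hb) hzD

end

section

variable {L : FirstOrder.Language.{u, u}} [L.Structure M]

/-- A predicate on tuples is definable with parameters. -/
def DP (L : FirstOrder.Language.{u, u}) [L.Structure M] {α : Type*} (p : (α → M) → Prop) : Prop :=
  Set.Definable (univ : Set M) L {t | p t}

/-- A function on tuples is definable with parameters. -/
abbrev DF (L : FirstOrder.Language.{u, u}) [L.Structure M] {α : Type*} (a : (α → M) → M) : Prop :=
  Set.DefinableFun L (univ : Set M) a

variable {α : Type*}

theorem DF.var (i : α) : DF L fun t : α → M => t i := DefinableFun.proj L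

theorem DF.const (a : M) : DF L fun _ : α → M => a := L.definableFun_const α (mem_univ a)

theorem DP.and {p q : (α → M) → Prop} (hp : DP L p) (hq : DP L q) : DP L fun t => p t ∧ q t :=
  Set.Definable.inter hp hq

theorem DP.or {p q : (α → M) → Prop} (hp : DP L p) (hq : DP L q) : DP L fun t => p t ∨ q t :=
  Set.Definable.union hp hq

theorem DP.not {p : (α → M) → Prop} (hp : DP L p) : DP L fun t => ¬ p t :=
  Set.Definable.compl hp

theorem DP.congr {p q : (α → M) → Prop} (hp : DP L p) (h : ∀ t, p t ↔ q t) : DP L q := by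
  have : p = q := funext fun t => propext (h t)
  exact this ▸ hp

theorem DP.imp {p q : (α → M) → Prop} (hp : DP L p) (hq : DP L q) : DP L fun t => p t → q t :=
  (hp.not.or hq).congr fun t => by tauto

theorem DP.ex {q : (α → M) → M → Prop}
    (h : DP L fun t : α ⊕ Fin 1 → M => q (fun i => t (Sum.inl i)) (t (Sum.inr 0))) :
    DP L fun t => ∃ x, q t x := by
  refine DP.congr (Definable.exists_of_finite h) fun t => ?_
  constructor
  · rintro ⟨y, hy⟩
    exact ⟨y 0, hy⟩
  · rintro ⟨x, hx⟩
    exact ⟨fun _ => x, hx⟩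

theorem DP.all {q : (α → M) → M → Prop}
    (h : DP L fun t : α ⊕ Fin 1 → M => q (fun i => t (Sum.inl i)) (t (Sum.inr 0))) :
    DP L fun t => ∀ x, q t x :=
  (DP.ex (q := fun t x => ¬ q t x) h.not).not.congr fun t => by simp

theorem DP.eq {a b : (α → M) → M} (ha : DF L a) (hb : DF L b) : DP L fun t => a t = b t :=
  DefinableFun.ofPred_eq ha hb

theorem DP.ne {a b : (α → M) → M} (ha : DF L a) (hb : DF L b) : DP L fun t => a t ≠ b t :=
  (DP.eq ha hb).not

theorem DP.subst {β : Type*} [Finite β] {p : (β → M) → Prop} (hp : DP L p)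
    {a : (α → M) → β → M} (ha : ∀ i, DF L fun t => a t i) : DP L fun t => p (a t) :=
  Set.Definable.preimage_map (F := a) ha hp

theorem DP.rel1 {p : M → Prop} (hp : DP L fun t : Fin 1 → M => p (t 0)) {a : (α → M) → M}
    (ha : DF L a) : DP L fun t => p (a t) :=
  hp.subst (a := fun t => ![a t]) fun i => by fin_cases i; exact ha

theorem DP.mem {s : Set M} (hs : Set.Definable₁ (univ : Set M) L s) {a : (α → M) → M}
    (ha : DF L a) : DP L fun t => a t ∈ s :=
  DP.rel1 (p := fun x => x ∈ s) hs ha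

theorem DP.rel2 {p : M → M → Prop} (hp : DP L fun t : Fin 2 → M => p (t 0) (t 1))
    {a b : (α → M) → M} (ha : DF L a) (hb : DF L b) : DP L fun t => p (a t) (b t) :=
  hp.subst (a := fun t => ![a t, b t]) fun i => by
    fin_cases i
    · exact ha
    · exact hb

theorem DP.rel3 {p : M → M → M → Prop} (hp : DP L fun t : Fin 3 → M => p (t 0) (t 1) (t 2))
    {a b c : (α → M) → M} (ha : DF L a) (hb : DF L b) (hc : DF L c) :
    DP L fun t => p (a t) (b t) (c t) :=
  hp.subst (a := fun t => ![a t, b t, c t]) fun i => by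
    fin_cases i
    · exact ha
    · exact hb
    · exact hc

theorem DF.comp {f : M → M} (hf : DF L fun t : Fin 1 → M => f (t 0)) {a : (α → M) → M}
    (ha : DF L a) : DF L fun t => f (a t) :=
  DefinableFun.comp (f := fun t : Fin 1 → M => f (t 0)) (g := fun t => ![a t])
    (fun i => by fin_cases i; exact ha) hf

theorem DF.of_graph {f : M → M} (hf : DP L fun t : Fin 2 → M => f (t 0) = t 1) :
    DF L fun t : Fin 1 → M => f (t 0) :=
  DP.rel2 (p := fun x y => f x = y) hf (a := fun t : Option (Fin 1) → M => t (some 0))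
    (b := fun t => t none) (DF.var _) (DF.var _)

theorem DP.C (r : L.Relations 3) {a b c : (α → M) → M} (ha : DF L a) (hb : DF L b) (hc : DF L c) :
    DP L fun t => interpC L M r (a t) (b t) (c t) := by
  refine DP.rel3 (p := interpC L M r) ?_ ha hb hc
  refine Set.Definable.mono (A := ∅) ?_ (empty_subset _)
  rw [empty_definable_iff]
  refine ⟨Language.Relations.formula r fun i => Language.Term.var i, ?_⟩
  ext t
  have ht : ![t 0, t 1, t 2] = t := by
    ext i
    fin_cases i <;> rfl
  rw [Set.mem_ofPred_eq, Set.mem_ofPred_eq, Language.Formula.realize_rel, interpC, ht]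
  rfl

end

section

variable {L : FirstOrder.Language.{u, u}} [L.Structure M]

/-- The order `N` on `P` describes the approach to a cut of the branch of `u` along nodes which
eventually lie in a bounded interval. -/
structure Approach (L : FirstOrder.Language.{u, u}) [L.Structure M] (r : L.Relations 3) (u : M)
    (P : Set M) (N : M → M → Prop) : Prop extends TailOrder P N where
  definable_set : Set.Definable₁ (univ : Set M) L P
  definable_rel : DP L fun t : Fin 2 → M => N (t 0) (t 1)
  cut : ∀ a, (∀ᶠ z in tail P N, interpC L M r z a u) ∨ ∀ᶠ z in tail P N, interpC L M r a z u
  complete : ∀ Q : Set M, Set.Definable₁ (univ : Set M) L Q → Q ⊆ P →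
    (∀ a ∈ Q, ∀ b ∈ P, ¬ N b a → b ∈ Q) → Q.Nonempty → (P \ Q).Nonempty →
    (∃ m ∈ Q, ∀ m' ∈ Q, ¬ N m' m) ∨ ∃ m ∈ P, m ∉ Q ∧ ∀ m' ∈ P, N m m' → m' ∈ Q
  bounded : ∀ v ∈ P, ∃ lo hi, hi ≠ u ∧
    ∀ s, interpC L M r lo s u ∧ interpC L M r s hi u ↔ s ∈ P ∧ N v s
  node_eq : ∀ a ∈ P, ∀ b ∈ P, ¬ N a b → ¬ N b a →
    node (interpC L M r) u a = node (interpC L M r) u b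

theorem Approach.not_rel_of_node_eq {r : L.Relations 3} {u : M} {P : Set M} {N : M → M → Prop}
    (h : CR (interpC L M r)) (hA : Approach L r u P N) {a b : M} (ha : a ∈ P) (hb : b ∈ P)
    (hab : node (interpC L M r) u a = node (interpC L M r) u b) : ¬ N a b := by
  intro hn
  obtain ⟨lo, hi, -, hs⟩ := hA.bounded a ha
  have h1 := (hs b).2 ⟨hb, hn⟩
  rw [node_eq_node h] at hab
  have h2 := (hs a).1 (by grind [h.symm, h.asymm, h.split])
  exact hA.asymm a ha a ha h2.2 h2.2

theorem definable_subset {A B : M → Set M} (hA : DP L fun t : Fin 2 → M => t 1 ∈ A (t 0))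
    (hB : DP L fun t : Fin 2 → M => t 1 ∈ B (t 0)) :
    DP L fun t : Fin 2 → M => A (t 0) ⊆ B (t 1) := by
  refine DP.congr (p := fun t : Fin 2 → M => ∀ y, y ∈ A (t 0) → y ∈ B (t 1)) ?_ fun t => Iff.rfl
  exact DP.all ((DP.rel2 (p := fun v y => y ∈ A v) hA (DF.var _) (DF.var _)).imp
    (DP.rel2 (p := fun v y => y ∈ B v) hB (DF.var _) (DF.var _)))

theorem definable_eq {A B : M → Set M} (hA : DP L fun t : Fin 2 → M => t 1 ∈ A (t 0))
    (hB : DP L fun t : Fin 2 → M => t 1 ∈ B (t 0)) :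
    DP L fun t : Fin 2 → M => A (t 0) = B (t 1) := by
  refine DP.congr ((definable_subset hA hB).and
    (DP.rel2 (p := fun v y => B v ⊆ A y) (definable_subset hB hA)
      (DF.var (1 : Fin 2)) (DF.var (0 : Fin 2)))) fun t => ?_
  exact Subset.antisymm_iff.symm

/-- A decreasing definable family of balls around `e` indexed by an approach and shrinking to `e`
eventually separates the nodes of the approach. -/
theorem Approach.eventually_injective {r : L.Relations 3} {u : M} {P : Set M} {N : M → M → Prop}
    (h : CR (interpC L M r))
    (hqf : ∀ s : Set M, Set.Definable₁ (univ : Set M) L s → QFDef (interpC L M r) s)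
    (hA : Approach L r u P N) {D : M → Set M}
    (hD : DP L fun t : Fin 2 → M => t 1 ∈ D (t 0))
    (hmono : ∀ a ∈ P, ∀ b ∈ P, ¬ N b a → D b ⊆ D a)
    (hshrink : ∀ a ∈ P, ∃ b ∈ P, N a b ∧ D b ≠ D a) :
    ∃ v₀ ∈ P, ∀ a ∈ P, ∀ b ∈ P, N v₀ a → D a = D b → ¬ N b a := by
  have hDD := definable_eq hD hD
  have hdec : ∀ s : Set M, Set.Definable₁ (univ : Set M) L s →
      (∃ v ∈ P, ∀ x ∈ P, N v x → x ∈ s) ∨ ∃ v ∈ P, ∀ x ∈ P, N v x → x ∉ s := by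
    intro s hs
    have := (hqf s hs).decided_of_cut h u hA.cut
    rwa [Decided, hA.mem_tail, hA.mem_tail] at this
  have hlt : ∀ a ∈ P, ∀ b ∈ P, N a b → D b ⊆ D a := fun a ha b hb hab =>
    hmono a ha b hb (hA.asymm a ha b hb hab)
  rcases hdec {a | ∀ b, b ∈ P → D a = D b → ¬ N b a} (by
    refine DP.all ?_
    exact (DP.mem hA.definable_set (DF.var _)).imp
      ((DP.rel2 (p := fun a b => D a = D b) hDD (DF.var _) (DF.var _)).imp
        (DP.rel2 hA.definable_rel (DF.var _) (DF.var _)).not)) with ⟨v, hv, hv'⟩ | ⟨v, hv, hv'⟩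
  · exact ⟨v, hv, fun a ha b hb hva hab => hv' a ha hva b hb hab⟩
  exfalso
  have hmax : ∀ v₁ ∈ P, N v v₁ → ∃ m ∈ P, ¬ N m v₁ ∧ ∀ b ∈ P, N m b → D m ≠ D b := by
    intro v₁ hv₁ hvv₁
    obtain ⟨c, hc, hvc, hne⟩ := hshrink v₁ hv₁
    have hcv : D c ⊆ D v₁ := hlt _ hv₁ _ hc hvc
    have hv₁Q : ¬ D v₁ ⊆ D c := fun hs => hne (Subset.antisymm hcv hs)
    rcases hA.complete {x | x ∈ P ∧ D x ⊆ D c} (by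
      exact (DP.mem hA.definable_set (DF.var _)).and
        (DP.rel2 (p := fun a b => D a ⊆ D b) (definable_subset hD hD) (DF.var _) (DF.const c)))
      (fun x hx => hx.1) (fun a ha b hb hab => ⟨hb, (hmono a ha.1 b hb hab).trans ha.2⟩)
      ⟨c, hc, Subset.rfl⟩ ⟨v₁, hv₁, fun hs => hv₁Q hs.2⟩ with ⟨m, hm, hm'⟩ | ⟨m, hm, hmQ, hm'⟩
    · exfalso
      have hv₁m : N v₁ m := by
        by_contra hn
        exact hv₁Q ((hmono m hm.1 v₁ hv₁ hn).trans hm.2)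
      have hvm := hA.trans hv hv₁ hm.1 hvv₁ hv₁m
      have := hv' m hm.1 hvm
      simp only [Set.mem_ofPred_eq, not_forall, not_not] at this
      obtain ⟨b, hb, hmb, hbm⟩ := this
      exact hm' b ⟨hb, hmb ▸ hm.2⟩ hbm
    · refine ⟨m, hm, fun hn => ?_, fun b hb hmb heq => ?_⟩
      · exact hv₁Q (hm' v₁ hv₁ hn).2
      · exact hmQ ⟨hm, heq ▸ (hm' b hb hmb).2⟩
  rcases hdec {a | ∀ b, b ∈ P → N a b → D a ≠ D b} (by
    refine DP.all ?_
    exact (DP.mem hA.definable_set (DF.var _)).imp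
      ((DP.rel2 hA.definable_rel (DF.var _) (DF.var _)).imp
        (DP.rel2 (p := fun a b => D a = D b) hDD (DF.var _) (DF.var _)).not))
    with ⟨v₂, hv₂, hv₂'⟩ | ⟨v₂, hv₂, hv₂'⟩
  · obtain ⟨v₁, hv₁, h1, h2⟩ : ∃ v₁ ∈ P, ¬ N v₁ v ∧ ¬ N v₁ v₂ := by
      by_cases hvv : N v v₂
      · exact ⟨v₂, hv₂, hA.asymm _ hv _ hv₂ hvv, fun hn => hA.asymm _ hv₂ _ hv₂ hn hn⟩
      · exact ⟨v, hv, fun hn => hA.asymm _ hv _ hv hn hn, hvv⟩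
    obtain ⟨c, hc, hvc, hne⟩ := hshrink v₁ hv₁
    have := hv' c hc ((hA.split _ hv₁ _ hv _ hc hvc).resolve_left h1)
    simp only [Set.mem_ofPred_eq, not_forall, not_not] at this
    obtain ⟨b, hb, hcb, hbc⟩ := this
    by_cases hv₁b : N v₁ b
    · exact hv₂' b hb ((hA.split _ hv₁ _ hv₂ _ hb hv₁b).resolve_left h2) c hc hbc hcb.symm
    · exact hne (Subset.antisymm (hlt _ hv₁ _ hc hvc) (hcb ▸ hmono _ hb _ hv₁ hv₁b))
  · obtain ⟨v₁, hv₁, h1, h2⟩ : ∃ v₁ ∈ P, N v v₁ ∧ N v₂ v₁ := by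
      by_cases hvv : N v v₂
      · obtain ⟨c, hc, hvc, -⟩ := hshrink v₂ hv₂
        exact ⟨c, hc, hA.trans hv hv₂ hc hvv hvc, hvc⟩
      · obtain ⟨c, hc, hvc, -⟩ := hshrink v hv
        exact ⟨c, hc, hvc, (hA.split _ hv _ hv₂ _ hc hvc).resolve_left hvv⟩
    obtain ⟨m, hm, hmv, hm'⟩ := hmax v₁ hv₁ h1
    exact hv₂' m hm ((hA.split _ hv₂ _ hm _ hv₁ h2).resolve_right hmv) hm'

end

section

variable {L : FirstOrder.Language.{u, u}} [L.Structure M]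

/-- A definable family of balls around `e` that is parametrised by the nodes of the branch of `e`.
It consists either of the closed balls or of the cones around `e`. -/
structure BallFamily (L : FirstOrder.Language.{u, u}) [L.Structure M] (r : L.Relations 3) (e : M)
    (B : M → Set M) : Prop where
  definable : DP L fun t : Fin 2 → M => t 1 ∈ B (t 0)
  subset_iff : ∀ c c', B c ⊆ B c' ↔ ¬ interpC L M r c c' e
  of_notMem : ∀ c y, y ∉ B c → ¬ interpC L M r c y e

theorem ballFamily_closedBall {r : L.Relations 3} (h : CR (interpC L M r)) (e : M) :
    BallFamily L r e fun c => {z | ¬ interpC L M r z e c} where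
  definable := (DP.C r (DF.var 1) (DF.const e) (DF.var 0)).not
  subset_iff c c' := node_subset_node h
  of_notMem c y hy := by
    simp only [Set.mem_ofPred_eq, not_not] at hy
    grind [h.symm, h.asymm, h.split]

theorem ballFamily_cone {r : L.Relations 3} (h : CR (interpC L M r)) (e : M) :
    BallFamily L r e fun c => {z | interpC L M r c z e} where
  definable := DP.C r (DF.var 0) (DF.var 1) (DF.const e)
  subset_iff c c' := by
    refine ⟨fun hs hc => h.irrefl _ _ (hs hc), fun hc z hz => ?_⟩
    simp only [Set.mem_ofPred_eq] at hz ⊢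
    grind [h.symm, h.asymm, h.split]
  of_notMem c y hy := hy

theorem BallFamily.eq_iff {r : L.Relations 3} {e : M} {B : M → Set M} (h : CR (interpC L M r))
    (hB : BallFamily L r e B) {c c' : M} :
    B c = B c' ↔ node (interpC L M r) e c = node (interpC L M r) e c' := by
  rw [Subset.antisymm_iff, hB.subset_iff, hB.subset_iff, node_eq_node h]

/-- A decreasing family of balls around `e`, indexed by an approach inside a bounded interval,
cannot run through all balls near `e`. -/
theorem Approach.false_of_balls {r : L.Relations 3} {u e : M} {P : Set M} {N : M → M → Prop}
    (hC : IsCRelation (interpC L M r)) (hNB : NB L M r)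
    (hA : Approach L r u P N) {D B : M → Set M}
    (hD : DP L fun t : Fin 2 → M => t 1 ∈ D (t 0))
    (hmono : ∀ a ∈ P, ∀ b ∈ P, ¬ N b a → D b ⊆ D a)
    (hB : BallFamily L r e B) {v₀ c₀ : M} (hv₀ : v₀ ∈ P)
    (hinj : ∀ a ∈ P, ∀ b ∈ P, N v₀ a → D a = D b → ¬ N b a)
    (hball : ∀ a ∈ P, N v₀ a → ∃ c, c ≠ e ∧ D a = B c) (hc₀ : c₀ ≠ e)
    (hsurj : ∀ c, c ≠ e → interpC L M r c₀ c e → ∃ v ∈ P, N v₀ v ∧ D v = B c) : False := by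
  have h := CR.of_isCRelation hC
  obtain ⟨c₁, hc₁, hc₀₁⟩ := exists_closer hC hc₀
  obtain ⟨v₁, hv₁, hv₀₁, hDv₁⟩ := hsurj c₁ hc₁ hc₀₁
  obtain ⟨lo, hi, hhi, hI⟩ := hA.bounded v₁ hv₁
  have hpast : ∀ {s}, s ∈ P → N v₁ s → N v₀ s := fun hs hn => hA.trans hv₀ hv₁ hs hv₀₁ hn
  have hDeq : ∀ a ∈ P, ∀ b ∈ P, ¬ N a b → ¬ N b a → D a = D b := fun a ha b hb h1 h2 =>
    Subset.antisymm (hmono b hb a ha h1) (hmono a ha b hb h2)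
  refine hNB u e {t | t 0 ∈ P ∧ N v₁ (t 0) ∧ t 1 ≠ e ∧ D (t 0) = B (t 1)} ?_
    (branchInterval (interpC L M r) u (some lo) hi) (branchInterval (interpC L M r) e (some c₁) e)
    ⟨lo, hi, rfl, fun hl => hhi ((isLeafSet_node h).1 hl)⟩ (isUnboundedInterval_leaf hC hc₁) ?_
  · exact (DP.mem hA.definable_set (DF.var _)).and
      ((DP.rel2 hA.definable_rel (DF.const v₁) (DF.var _)).and
        ((DP.ne (DF.var _) (DF.const e)).and (definable_eq hD hB.definable)))
  have hcoded : ∀ {s t}, s ∈ P → N v₁ s → t ≠ e → D s = B t →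
      codedRel (interpC L M r)
        {t : Fin 2 → M | t 0 ∈ P ∧ N v₁ (t 0) ∧ t 1 ≠ e ∧ D (t 0) = B (t 1)} u e
        (node (interpC L M r) u s) (node (interpC L M r) e t) := fun h1 h2 h3 h4 =>
    ⟨_, _, ⟨h1, h2, h3, h4⟩, rfl, rfl⟩
  have hmaps : ∀ A A', codedRel (interpC L M r)
        {t : Fin 2 → M | t 0 ∈ P ∧ N v₁ (t 0) ∧ t 1 ≠ e ∧ D (t 0) = B (t 1)} u e A A' →
      A ∈ branchInterval (interpC L M r) u (some lo) hi ∧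
      A' ∈ branchInterval (interpC L M r) e (some c₁) e := by
    rintro _ _ ⟨s, t, ⟨hs, hn, ht, hst⟩, rfl, rfl⟩
    simp only [Matrix.cons_val_zero, Matrix.cons_val_one] at hs hn ht hst
    rw [mem_branchInterval_some h, mem_branchInterval_some h]
    obtain ⟨h1, h2⟩ := (hI s).2 ⟨hs, hn⟩
    refine ⟨⟨s, rfl, ?_, h1, h2⟩, t, rfl, ht, ?_, h.diag _ _ ht⟩
    · rintro rfl
      exact h.irrefl_right _ _ h2
    · by_contra hc
      rw [← hB.subset_iff, ← hst, ← hDv₁] at hc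
      exact hinj s hs v₁ hv₁ (hpast hs hn)
        (Subset.antisymm (hmono _ hv₁ _ hs (hA.asymm _ hv₁ _ hs hn)) hc) hn
  refine ⟨hmaps, fun A hAI => ?_, fun A hAJ => ?_⟩
  · obtain ⟨s, rfl, -, h1, h2⟩ := (mem_branchInterval_some h).1 hAI
    obtain ⟨hs, hn⟩ := (hI s).1 ⟨h1, h2⟩
    obtain ⟨c, hc, hsc⟩ := hball s hs (hpast hs hn)
    have hcd := hcoded hs hn hc hsc
    refine ⟨_, ⟨(hmaps _ _ hcd).2, hcd⟩, ?_⟩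
    rintro _ ⟨-, s', t', ⟨hs', hn', ht', hst'⟩, hss', rfl⟩
    simp only [Matrix.cons_val_zero, Matrix.cons_val_one] at hs' hn' ht' hst'
    rw [← hB.eq_iff h, ← hst', ← hsc]
    exact hDeq _ hs' _ hs (hA.not_rel_of_node_eq h hs' hs hss'.symm)
      (hA.not_rel_of_node_eq h hs hs' hss')
  · obtain ⟨c, rfl, hc, h1, -⟩ := (mem_branchInterval_some h).1 hAJ
    obtain ⟨v, hv, hv₀v, hvc⟩ := hsurj c hc (h.mid hc₀₁ h1)
    have hn : N v₁ v := by
      by_contra hn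
      have := hmono v hv v₁ hv₁ hn
      rw [hDv₁, hvc, hB.subset_iff] at this
      exact this h1
    have hcd := hcoded hv hn hc hvc
    refine ⟨_, ⟨(hmaps _ _ hcd).1, hcd⟩, ?_⟩
    rintro _ ⟨-, s', t', ⟨hs', hn', ht', hst'⟩, rfl, htt'⟩
    simp only [Matrix.cons_val_zero, Matrix.cons_val_one] at hs' hn' ht' hst'
    have heq : D s' = D v := by rw [hst', hvc, hB.eq_iff h, htt']
    exact hA.node_eq _ hs' _ hv (hinj v hv s' hs' hv₀v heq.symm) (hinj s' hs' v hv (hpast hs' hn') heq)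

/-- Under (NB), no definable function of `x` near `e` follows an approach inside a bounded
interval. -/
theorem Approach.false {r : L.Relations 3} {u e s : M} {P : Set M} {N : M → M → Prop}
    (hC : IsCRelation (interpC L M r)) (hNB : NB L M r)
    (hqf : ∀ s : Set M, Set.Definable₁ (univ : Set M) L s → QFDef (interpC L M r) s)
    (hA : Approach L r u P N) (hs : s ≠ e) {w : M → M} (hw : DF L fun t : Fin 1 → M => w (t 0))
    (hwP : ∀ᶠ x in near (interpC L M r) e, w x ∈ P)
    (hlim : ∀ v ∈ P, ∀ᶠ x in near (interpC L M r) e, N v (w x)) : False := by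
  have h := CR.of_isCRelation hC
  obtain ⟨s₁, hs₁, hwP'⟩ := (mem_near h hs).1 hwP
  set D : M → Set M := fun v =>
    {y | interpC L M r s₁ y e ∧ ∀ x, x ≠ e → ¬ interpC L M r x e y → N v (w x)} with hDdef
  have hD : DP L fun t : Fin 2 → M => t 1 ∈ D (t 0) := by
    refine (DP.C r (DF.const s₁) (DF.var 1) (DF.const e)).and (DP.all ?_)
    exact (DP.ne (DF.var _) (DF.const e)).imp
      ((DP.C r (DF.var _) (DF.const e) (DF.var _)).not.imp
        (DP.rel2 hA.definable_rel (DF.var _) (DF.comp hw (DF.var _))))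
  have hDP : ∀ v y, y ∈ D v → ∀ x, x ≠ e → ¬ interpC L M r x e y → w x ∈ P := by
    intro v y hy x hx hxy
    exact hwP' x hx (by have := hy.1; grind [h.symm, h.asymm, h.split])
  have hmono : ∀ a ∈ P, ∀ b ∈ P, ¬ N b a → D b ⊆ D a := by
    intro a ha b hb hab y hy
    exact ⟨hy.1, fun x hx hxy =>
      (hA.split b hb a ha _ (hDP b y hy x hx hxy) (hy.2 x hx hxy)).resolve_left hab⟩
  have hself : ∀ y, y ≠ e → interpC L M r s₁ y e → y ∉ D (w y) := by
    intro y hy hsy hyD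
    have hyP := hwP' y hy hsy
    have := hyD.2 y hy (h.irrefl_right _ _)
    exact hA.asymm _ hyP _ hyP this this
  have hconv : ∀ v, BallConvex (interpC L M r) e (D v) := by
    refine fun v => ⟨⟨h.diag _ _ hs₁, fun x hx hxe => absurd (h.diag _ _ hx) hxe⟩,
      fun y hy z hz => ⟨by have := hy.1; grind [h.symm, h.asymm, h.split], fun x hx hxz => ?_⟩⟩
    exact hy.2 x hx (by grind [h.symm, h.asymm, h.split])
  have hs₁D : ∀ v, s₁ ∉ D v := fun v hv => h.irrefl _ _ hv.1
  have hnear : ∀ t, t ≠ e → ∃ y, y ≠ e ∧ interpC L M r t y e ∧ interpC L M r s₁ y e := by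
    intro t ht
    by_cases hts : interpC L M r t s₁ e
    · obtain ⟨y, hy, hy'⟩ := exists_closer hC hs₁
      exact ⟨y, hy, h.mid hts hy', hy'⟩
    · obtain ⟨y, hy, hy'⟩ := exists_closer hC ht
      exact ⟨y, hy, hy', (h.split _ _ _ s₁ (h.symm _ _ _ hy')).elim
        (fun h' => absurd (by grind [h.symm, h.asymm, h.split]) hts)
        (fun h' => by grind [h.symm, h.asymm, h.split])⟩
  have hnontriv : ∀ v ∈ P, ∃ y, y ≠ e ∧ y ∈ D v := by
    intro v hv
    obtain ⟨t, ht, ht'⟩ := (mem_near h hs).1 (hlim v hv)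
    obtain ⟨y, hy, hty, hsy⟩ := hnear t ht
    exact ⟨y, hy, hsy, fun x hx hxy => ht' x hx (by grind [h.symm, h.asymm, h.split])⟩
  have hshrink : ∀ a ∈ P, ∃ b ∈ P, N a b ∧ D b ≠ D a := by
    intro a ha
    obtain ⟨y, hy, hya⟩ := hnontriv a ha
    refine ⟨w y, hwP' y hy hya.1, hya.2 y hy (h.irrefl_right _ _), fun heq => ?_⟩
    exact hself y hy hya.1 (heq ▸ hya)
  have hDv : ∀ v, Set.Definable₁ (univ : Set M) L (D v) := fun v =>
    DP.rel2 (p := fun a b => b ∈ D a) hD (DF.const v) (DF.var (0 : Fin 1))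
  obtain ⟨v₀, hv₀, hinj⟩ := hA.eventually_injective h hqf hD hmono hshrink
  have hballs : ∃ B, BallFamily L r e B ∧ ∀ᶠ v in tail P N, ∃ c, c ≠ e ∧ D v = B c := by
    rcases (hqf {v | ∃ c, c ≠ e ∧ D v = {z | ¬ interpC L M r z e c}} (by
      refine DP.ex ((DP.ne (DF.var _) (DF.const e)).and ?_)
      exact DP.rel2 (p := fun v c => D v = {z | ¬ interpC L M r z e c})
        (definable_eq (B := fun c => {z | ¬ interpC L M r z e c}) hD
          (ballFamily_closedBall h e).definable) (DF.var _) (DF.var _))).decided_of_cut h u hA.cut with hcl | hcl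
    · exact ⟨_, ballFamily_closedBall h e, hcl⟩
    · refine ⟨_, ballFamily_cone h e, ?_⟩
      have hP : ∀ᶠ v in tail P N, v ∈ P := by
        rw [Filter.Eventually, hA.mem_tail]
        exact ⟨v₀, hv₀, fun x hx _ => hx⟩
      filter_upwards [hcl, hP] with v hv hvP
      rcases (hqf _ (hDv v)).ball_of_convex h (hconv v) (hs₁D v) with ⟨a, ha, hva⟩ | ⟨b, hb, hvb⟩
      · refine absurd ⟨a, ?_, hva⟩ hv
        rintro rfl
        obtain ⟨y, hy, hyv⟩ := hnontriv v hvP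
        rw [hva] at hyv
        exact hyv (h.diag _ _ hy)
      · exact ⟨b, fun hbe => hb (hbe ▸ (hconv v).1), hvb⟩
  obtain ⟨B, hB, hDB⟩ := hballs
  obtain ⟨v₂, hv₂, hv₂'⟩ := hA.mem_tail.1 (Filter.inter_mem hDB
    (hA.mem_tail.2 ⟨v₀, hv₀, fun x _ hx => hx⟩ : {x | N v₀ x} ∈ tail P N))
  have himage : ∀ᶠ c in near (interpC L M r) e, ∃ v, v ∈ P ∧ N v₂ v ∧ D v = B c := by
    refine ((hqf {c | ∃ v, v ∈ P ∧ N v₂ v ∧ D v = B c} (by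
      refine DP.ex ((DP.mem hA.definable_set (DF.var _)).and
        ((DP.rel2 hA.definable_rel (DF.const v₂) (DF.var _)).and ?_))
      exact DP.rel2 (p := fun v c => D v = B c) (definable_eq hD hB.definable) (DF.var _) (DF.var _))).decided_near
        h hs).resolve_right fun hnot => ?_
    obtain ⟨t, ht, ht'⟩ := (mem_near h hs).1 hnot
    obtain ⟨y, hy, hty, hsy⟩ := hnear t ht
    have hyP := hwP' y hy hsy
    obtain ⟨v, hv, hv₂v, hyv⟩ : ∃ v ∈ P, N v₂ v ∧ y ∉ D v := by
      by_cases hn : N (w y) v₂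
      · obtain ⟨v, hv, hv₂v, -⟩ := hshrink v₂ hv₂
        exact ⟨v, hv, hv₂v, fun hyv => hself y hy hsy (hmono _ hyP _ hv
          (hA.asymm _ hyP _ hv (hA.trans hyP hv₂ hv hn hv₂v)) hyv)⟩
      · obtain ⟨v, hv, hwv, -⟩ := hshrink (w y) hyP
        refine ⟨v, hv, (hA.split _ hyP _ hv₂ _ hv hwv).resolve_left hn, fun hyv => ?_⟩
        exact hself y hy hsy (hmono _ hyP _ hv (hA.asymm _ hyP _ hv hwv) hyv)
    obtain ⟨c, hc, hvc⟩ := (hv₂' v hv hv₂v).1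
    rw [hvc] at hyv
    have := hB.of_notMem c y hyv
    exact ht' c hc (by grind [h.symm, h.asymm, h.split]) ⟨v, hv, hv₂v, hvc⟩
  obtain ⟨c₀, hc₀, hc₀'⟩ := (mem_near h hs).1 himage
  exact hA.false_of_balls hC hNB hD hmono hB hv₂
    (fun a ha b hb hn => hinj a ha b hb (hv₂' a ha hn).2) (fun a ha hn => (hv₂' a ha hn).1) hc₀ hc₀'

end

section

variable {L : FirstOrder.Language.{u, u}} [L.Structure M]

/-- The nodes of the branch of `u` inside a cone approach the base of the cone. -/
theorem approach_cone {r : L.Relations 3} (h : CR (interpC L M r))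
    (hqf : ∀ s : Set M, Set.Definable₁ (univ : Set M) L s → QFDef (interpC L M r) s)
    {u b v : M} (hvu : v ≠ u) (hv : interpC L M r b v u) :
    Approach L r u {y | interpC L M r b y u ∧ y ≠ u} fun a c => interpC L M r c u a := by
  have hT : TailOrder {y | interpC L M r b y u ∧ y ≠ u} fun a c => interpC L M r c u a :=
    { nonempty := ⟨v, hv, hvu⟩
      asymm := fun a _ c _ => by grind [h.symm, h.asymm, h.split]
      split := fun a _ c _ d _ => by grind [h.symm, h.asymm, h.split] }
  have hP : Set.Definable₁ (univ : Set M) L {y | interpC L M r b y u ∧ y ≠ u} :=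
    (DP.C r (DF.const b) (DF.var _) (DF.const u)).and (DP.ne (DF.var _) (DF.const u))
  refine { hT with
    definable_set := hP
    definable_rel := DP.C r (DF.var 1) (DF.const u) (DF.var 0)
    cut := fun a => ?_
    complete := fun Q hQ hQP hup hQne hQc => ?_
    bounded := fun a ha => ⟨b, a, ha.2, fun s => ?_⟩
    node_eq := fun a _ c _ h1 h2 => ?_ }
  · rw [Filter.Eventually, Filter.Eventually, hT.mem_tail, hT.mem_tail]
    by_cases ha : interpC L M r b a u
    · left
      by_cases hau : a = u
      · subst hau
        exact ⟨v, ⟨hv, hvu⟩, fun x hx _ => h.diag _ _ hx.2⟩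
      · exact ⟨a, ⟨ha, hau⟩, fun x _ hx => h.symm _ _ _ hx⟩
    · right
      refine ⟨v, ⟨hv, hvu⟩, fun x hx _ => ?_⟩
      have := hx.1
      simp only [Set.mem_ofPred_eq]
      grind [h.symm, h.asymm, h.split]
  · have hK : Set.Definable₁ (univ : Set M) L {z | ∀ v', v' ∈ Q → interpC L M r v' u z} :=
      DP.all ((DP.mem hQ (DF.var _)).imp (DP.C r (DF.var _) (DF.const u) (DF.var _)))
    obtain ⟨q, hq⟩ := hQne
    obtain ⟨p, hpP, hpQ⟩ := hQc
    have hsub : ∀ z, z ∈ {y | interpC L M r b y u ∧ y ≠ u} → z ∉ Q →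
        ∀ v', v' ∈ Q → interpC L M r v' u z := fun z hz hzQ v' hv' => by
      by_contra hn
      exact hzQ (hup v' hv' z hz hn)
    rcases (hqf _ hK).ball_of_convex h (u := u) (b₀ := q)
      ⟨fun v' hv' => h.diag _ _ (hQP hv').2, fun y hy z hz v' hv' => by
        have := hy v' hv'
        grind [h.symm, h.asymm, h.split]⟩ (fun hh => h.irrefl_right _ _ (hh q hq))
      with ⟨a, ha, hKa⟩ | ⟨c, hc, hKc⟩
    · right
      have hmem : ∀ z, ¬ interpC L M r z u a ↔ ∀ v', v' ∈ Q → interpC L M r v' u z := fun z =>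
        (Set.ext_iff.1 hKa z).symm
      refine ⟨a, ⟨?_, ?_⟩, fun haQ => h.irrefl_right _ _ (ha a haQ), fun m' hm' hn => ?_⟩
      · have h1 := ha q hq
        have h2 := (hQP hq).1
        grind [h.symm, h.asymm, h.split]
      · rintro rfl
        exact (hmem p).2 (hsub p hpP hpQ) (h.diag _ _ hpP.2)
      · by_contra hm'Q
        exact (hmem m').2 (hsub m' hm' hm'Q) hn
    · left
      have hmem : ∀ z, interpC L M r c z u ↔ ∀ v', v' ∈ Q → interpC L M r v' u z := fun z =>
        (Set.ext_iff.1 hKc z).symm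
      simp only [Set.mem_ofPred_eq, not_forall] at hc
      obtain ⟨m, hm, hmc⟩ := hc
      refine ⟨m, hm, fun m' hm' hn => ?_⟩
      have : ¬ interpC L M r c m' u := fun hh => h.irrefl_right _ _ ((hmem m').1 hh m' hm')
      grind [h.symm, h.asymm, h.split]
  · constructor
    · rintro ⟨h1, h2⟩
      refine ⟨⟨h1, ?_⟩, h.symm _ _ _ h2⟩
      rintro rfl
      exact h.irrefl_right _ _ h2
    · rintro ⟨h1, h2⟩
      exact ⟨h1.1, h.symm _ _ _ h2⟩
  · rw [node_eq_node h]
    exact ⟨fun h' => h2 (h.symm _ _ _ h'), fun h' => h1 (h.symm _ _ _ h')⟩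

/-- The nodes of the branch of `u` below a closed ball approach the closed ball. -/
theorem approach_closedBall {r : L.Relations 3} (h : CR (interpC L M r))
    (hqf : ∀ s : Set M, Set.Definable₁ (univ : Set M) L s → QFDef (interpC L M r) s)
    {u p b : M} (hpu : p ≠ u) (hb : interpC L M r b u p) :
    Approach L r u {y | interpC L M r y u p} fun a c => interpC L M r a u c := by
  have hT : TailOrder {y | interpC L M r y u p} fun a c => interpC L M r a u c :=
    { nonempty := ⟨b, hb⟩
      asymm := fun a _ c _ => by grind [h.symm, h.asymm, h.split]
      split := fun a _ c _ d _ => by grind [h.symm, h.asymm, h.split] }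
  refine { hT with
    definable_set := DP.C r (DF.var _) (DF.const u) (DF.const p)
    definable_rel := DP.C r (DF.var 0) (DF.const u) (DF.var 1)
    cut := fun a => ?_
    complete := fun Q hQ hQP hup hQne hQc => ?_
    bounded := fun a ha => ⟨a, p, hpu, fun s => ?_⟩
    node_eq := fun a _ c _ h1 h2 => ?_ }
  · rw [Filter.Eventually, Filter.Eventually, hT.mem_tail, hT.mem_tail]
    by_cases ha : interpC L M r a u p
    · right
      exact ⟨a, ha, fun x _ hx => h.symm _ _ _ hx⟩
    · left
      refine ⟨b, hb, fun x hx _ => ?_⟩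
      simp only [Set.mem_ofPred_eq] at hx ⊢
      grind [h.symm, h.asymm, h.split]
  · have hK : Set.Definable₁ (univ : Set M) L {z | ∃ v', v' ∈ Q ∧ ¬ interpC L M r z u v'} :=
      DP.ex ((DP.mem hQ (DF.var _)).and (DP.C r (DF.var _) (DF.const u) (DF.var _)).not)
    obtain ⟨q, hq⟩ := hQne
    obtain ⟨p', hpP, hpQ⟩ := hQc
    rcases (hqf _ hK).ball_of_convex h (u := u) (b₀ := p')
      ⟨⟨q, hq, h.irrefl _ _⟩, fun y hy z hz => by
        obtain ⟨v', hv', hyv'⟩ := hy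
        exact ⟨v', hv', by grind [h.symm, h.asymm, h.split]⟩⟩
      (fun ⟨v', hv', hh⟩ => hpQ (hup v' hv' p' hpP hh)) with ⟨a, ⟨m, hm, ham⟩, hKa⟩ | ⟨c, hc, hKc⟩
    · left
      refine ⟨m, hm, fun m' hm' hn => ?_⟩
      have : ¬ interpC L M r m' u a :=
        (Set.ext_iff.1 hKa m').1 ⟨m', hm', h.irrefl_right _ _⟩
      grind [h.symm, h.asymm, h.split]
    · right
      simp only [Set.mem_ofPred_eq, not_exists, not_and, not_not] at hc
      refine ⟨c, ?_, fun hcQ => h.irrefl_right _ _ (hc c hcQ), fun m' hm' hn => ?_⟩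
      · have h1 := hc q hq
        have h2 := hQP hq
        simp only [Set.mem_ofPred_eq] at h2 ⊢
        grind [h.symm, h.asymm, h.split]
      · obtain ⟨v', hv', hh⟩ := (Set.ext_iff.1 hKc m').2 (h.symm _ _ _ hn)
        exact hup v' hv' m' hm' hh
  · simp only [Set.mem_ofPred_eq]
    constructor
    · rintro ⟨h1, h2⟩
      exact ⟨h.symm _ _ _ h2, h.symm _ _ _ h1⟩
    · rintro ⟨h1, h2⟩
      exact ⟨h.symm _ _ _ h2, h.symm _ _ _ h1⟩
  · rw [node_eq_node h]
    exact ⟨fun h' => h1 (h.symm _ _ _ h'), fun h' => h2 (h.symm _ _ _ h')⟩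

end

section

variable {C : M → M → M → Prop}

/-- Two elements of the closed ball `u ∧ v` lie in the same cone of this ball. -/
def SameCone (C : M → M → M → Prop) (u v a b : M) : Prop := C u a b ∨ C v a b

theorem SameCone.refl (h : CR C) {u v : M} (huv : u ≠ v) (a : M) : SameCone C u v a a := by
  by_cases ha : u = a
  · subst ha
    exact Or.inr (h.diag _ _ huv.symm)
  · exact Or.inl (h.diag _ _ ha)

theorem SameCone.trans (h : CR C) {u v a b c : M} (hab : SameCone C u v b a)
    (hac : SameCone C u v c a) :
    SameCone C u v b c := by
  unfold SameCone at *
  grind [h.symm, h.asymm, h.split]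

/-- The filter of the sets that contain all but finitely many cones of the ball `u ∧ v`. -/
def cofiniteCones (C : M → M → M → Prop) (u v : M) : Filter M where
  sets := {A | ∃ F : Set M, F.Finite ∧ F ⊆ node C u v ∧
    ∀ z ∈ node C u v, (∀ a ∈ F, ¬ SameCone C u v z a) → z ∈ A}
  univ_sets := ⟨∅, Set.finite_empty, Set.empty_subset _, fun _ _ _ => trivial⟩
  sets_of_superset := fun ⟨F, h1, h2, h3⟩ hs => ⟨F, h1, h2, fun z hz ha => hs (h3 z hz ha)⟩
  inter_sets := fun ⟨F, h1, h2, h3⟩ ⟨G, k1, k2, k3⟩ =>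
    ⟨F ∪ G, h1.union k1, Set.union_subset h2 k2, fun z hz ha =>
      ⟨h3 z hz fun a haF => ha a (Or.inl haF), k3 z hz fun a haG => ha a (Or.inr haG)⟩⟩

theorem mem_cofiniteCones_of_pair {u v a b : M} {A : Set M}
    (hA : ∀ z ∈ node C u v, (a ∈ node C u v → ¬ SameCone C u v z a) →
      (b ∈ node C u v → ¬ SameCone C u v z b) → z ∈ A) : A ∈ cofiniteCones C u v :=
  ⟨{a, b} ∩ node C u v, (Set.toFinite _).inter_of_left _, Set.inter_subset_right, fun z hz hF =>
    hA z hz (fun ha => hF a ⟨by simp, ha⟩) fun hb => hF b ⟨by simp, hb⟩⟩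

theorem QFDef.decided_cofiniteCones (h : CR C) {u v : M} (huv : u ≠ v) {A : Set M}
    (hA : QFDef C A) : Decided (cofiniteCones C u v) A := by
  have key : ∀ {S : M → Prop} (a b : M) (p : Prop), (∀ z ∈ node C u v,
      (a ∈ node C u v → ¬ SameCone C u v z a) → (b ∈ node C u v → ¬ SameCone C u v z b) →
      (S z ↔ p)) → Decided (cofiniteCones C u v) {z | S z} := by
    intro S a b p hp
    by_cases hp' : p
    · exact Or.inl (mem_cofiniteCones_of_pair fun z hz ha hb => (hp z hz ha hb).2 hp')
    · exact Or.inr (mem_cofiniteCones_of_pair fun z hz ha hb hS => hp' ((hp z hz ha hb).1 hS))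
  refine QFDef.decided h (fun a => ?_) (fun a b => ?_) (fun a b => ?_) hA
  · refine mem_cofiniteCones_of_pair (a := a) (b := a) fun z hz ha _ => ?_
    rintro rfl
    exact ha hz (SameCone.refl h huv _)
  · refine key a b ((¬ C a u v ∧ ¬ C b u v ∧ SameCone C u v a b) ∨
      (C a u v ∧ C b u v ∧ C u a b)) fun z hz ha hb => ?_
    unfold SameCone node at *
    simp only [Set.mem_ofPred_eq] at hz ha hb
    grind [h.symm, h.asymm, h.split]
  · refine key a b (C a u v ∧ C a u b) fun z hz ha hb => ?_
    unfold SameCone node at *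
    simp only [Set.mem_ofPred_eq] at hz ha hb
    grind [h.symm, h.asymm, h.split]

theorem exists_mem_of_mem_cofiniteCones (h : CR C) {u v : M} {A : Set M}
    (hA : A ∈ cofiniteCones C u v) {z : ℕ → M} (hz : ∀ i, z i ∈ node C u v)
    (hzz : ∀ i j, i < j → ¬ SameCone C u v (z i) (z j)) : ∃ i, z i ∈ A := by
  obtain ⟨F, hF, hFB, hFA⟩ := hA
  by_contra! hcon
  have : ∀ i, ∃ a : F, SameCone C u v (z i) a := by
    intro i
    by_contra! hi
    exact hcon i (hFA _ (hz i) fun a ha => hi ⟨a, ha⟩)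
  choose f hf using this
  have := hF.to_subtype
  obtain ⟨i, j, hij, hfij⟩ := Finite.exists_ne_map_eq_of_infinite f
  have key : ∀ i j, f i = f j → SameCone C u v (z i) (z j) := fun i j hij =>
    SameCone.trans h (hf i) (hij ▸ hf j)
  rcases lt_or_gt_of_ne hij with hlt | hlt
  · exact hzz _ _ hlt (key _ _ hfij)
  · exact hzz _ _ hlt (key _ _ hfij.symm)

end

section

open Filter

variable {L : FirstOrder.Language.{u, u}} [L.Structure M]

/-- The ultrapower of `M` with respect to a nonprincipal ultrafilter on `ℕ`. -/
abbrev UltraPower (M : Type u) : Type u := (hyperfilter ℕ : Filter ℕ).Product fun _ => M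

/-- The class of a sequence in the ultrapower. -/
noncomputable def UltraPower.mk (x : ℕ → M) : UltraPower M :=
  (x : (hyperfilter ℕ : Filter ℕ).Product fun _ => M)

theorem UltraPower.realize {β : Type*} [Nonempty M] (φ : L.Formula β) (x : β → ℕ → M) :
    (φ.Realize fun i => UltraPower.mk (x i)) ↔
      ∀ᶠ n in (hyperfilter ℕ : Filter ℕ), φ.Realize fun i => x i n :=
  Language.Ultraproduct.realize_formula_cast φ x

theorem UltraPower.interpC_mk (r : L.Relations 3) (x y z : ℕ → M) :
    interpC L (UltraPower M) r (mk x) (mk y) (mk z) ↔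
      ∀ᶠ n in (hyperfilter ℕ : Filter ℕ), interpC L M r (x n) (y n) (z n) := by
  have : Nonempty M := ⟨x 0⟩
  have hr := UltraPower.realize (r.formula fun i : Fin 3 => Language.Term.var i) ![x, y, z]
  simp only [Language.Formula.realize_rel, Language.Term.realize_var] at hr
  have h1 : (fun i => mk (![x, y, z] i)) = ![mk x, mk y, mk z] := by
    ext i
    fin_cases i <;> rfl
  have h2 : ∀ n, (fun i => ![x, y, z] i n) = ![x n, y n, z n] := by
    intro n
    ext i
    fin_cases i <;> rfl
  simp only [h1, h2] at hr
  exact hr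

theorem UltraPower.mk_eq (x y : ℕ → M) :
    mk x = mk y ↔ ∀ᶠ n in (hyperfilter ℕ : Filter ℕ), x n = y n :=
  Quotient.eq''

theorem UltraPower.exists_mk (a : UltraPower M) : ∃ x, mk x = a :=
  Quotient.exists_rep a

theorem UltraPower.cr {r : L.Relations 3} (h : CR (interpC L M r)) :
    CR (interpC L (UltraPower M) r) where
  symm a b c := by
    obtain ⟨x, rfl⟩ := exists_mk a
    obtain ⟨y, rfl⟩ := exists_mk b
    obtain ⟨z, rfl⟩ := exists_mk c
    simp only [interpC_mk]
    exact fun h1 => h1.mono fun n => h.symm _ _ _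
  asymm a b c := by
    obtain ⟨x, rfl⟩ := exists_mk a
    obtain ⟨y, rfl⟩ := exists_mk b
    obtain ⟨z, rfl⟩ := exists_mk c
    simp only [interpC_mk, ← Ultrafilter.eventually_not]
    exact fun h1 => h1.mono fun n => h.asymm _ _ _
  split a b c d := by
    obtain ⟨x, rfl⟩ := exists_mk a
    obtain ⟨y, rfl⟩ := exists_mk b
    obtain ⟨z, rfl⟩ := exists_mk c
    obtain ⟨t, rfl⟩ := exists_mk d
    simp only [interpC_mk, ← Ultrafilter.eventually_or]
    exact fun h1 => h1.mono fun n => h.split _ _ _ _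
  diag a b := by
    obtain ⟨x, rfl⟩ := exists_mk a
    obtain ⟨y, rfl⟩ := exists_mk b
    simp only [interpC_mk, ne_eq, mk_eq, ← Ultrafilter.eventually_not]
    exact fun h1 => h1.mono fun n => h.diag _ _

theorem UltraPower.elementarilyEquivalent [Nonempty M] :
    L.ElementarilyEquivalent M (UltraPower M) :=
  Language.elementarilyEquivalent_iff.2 fun φ => by
    rw [Language.Ultraproduct.sentence_realize, Filter.eventually_const]

/-- In a C-minimal structure, a definable family of sets cannot contain infinitely many cones of a
closed ball while omitting arbitrarily large finite numbers of them. -/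
theorem CMinimal.uniform_cones {r : L.Relations 3} (h : CR (interpC L M r))
    (hmin : CMinimal L M r) {u v : M} (huv : u ≠ v) {A : M → Set M}
    (hA : DP L fun t : Fin 2 → M => t 1 ∈ A (t 0)) {s z : ℕ → M} {y : ℕ → ℕ → M}
    (hz : ∀ i, z i ∈ node (interpC L M r) u v)
    (hzz : ∀ i j, i < j → ¬ SameCone (interpC L M r) u v (z i) (z j))
    (hzA : ∀ n, ∀ i ≤ n, z i ∉ A (s n))
    (hy : ∀ n i, y n i ∈ node (interpC L M r) u v)
    (hyy : ∀ n i j, i < j → ¬ SameCone (interpC L M r) u v (y n i) (y n j))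
    (hyA : ∀ n i, y n i ∈ A (s n)) : False := by
  have : Nonempty M := ⟨u⟩
  obtain ⟨φ, hφ⟩ := Set.definable_iff_exists_formula_sum.1 hA
  have hφ' : ∀ a b, b ∈ A a ↔ φ.Realize (Sum.elim (fun a : (univ : Set M) => (a : M)) ![a, b]) := fun a b =>
    Set.ext_iff.1 hφ ![a, b]
  set N := UltraPower M
  have hN := UltraPower.cr h
  let A' : Set N := {b | φ.Realize (Sum.elim (fun a : (univ : Set M) => UltraPower.mk fun _ => (a : M))
    ![UltraPower.mk s, b])}
  have hA' : ∀ x : ℕ → M, UltraPower.mk x ∈ A' ↔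
      ∀ᶠ n in (hyperfilter ℕ : Filter ℕ), x n ∈ A (s n) := by
    intro x
    have := UltraPower.realize φ (Sum.elim (fun (a : (univ : Set M)) _ => (a : M)) ![s, x])
    have h1 : (fun i => UltraPower.mk (Sum.elim (fun (a : (univ : Set M)) _ => (a : M)) ![s, x] i)) =
        Sum.elim (fun a : (univ : Set M) => UltraPower.mk fun _ => (a : M)) ![UltraPower.mk s, UltraPower.mk x] := by
      ext i
      rcases i with i | i
      · rfl
      · fin_cases i <;> rfl
    have h2 : ∀ n, (fun i => Sum.elim (fun (a : (univ : Set M)) _ => (a : M)) ![s, x] i n) =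
        Sum.elim (fun a : (univ : Set M) => (a : M)) ![s n, x n] := by
      intro n
      ext i
      rcases i with i | i
      · rfl
      · fin_cases i <;> rfl
    simp only [h1, h2, ← hφ'] at this
    exact this
  have hdef : Set.Definable₁ (univ : Set N) L A' := by
    refine Set.definable_iff_exists_formula_sum.2 ⟨φ.relabel (Sum.elim
      (fun a : (univ : Set M) => Sum.inl ⟨UltraPower.mk fun _ => (a : M), mem_univ _⟩)
      ![Sum.inl ⟨UltraPower.mk s, mem_univ _⟩, Sum.inr 0]), ?_⟩
    ext t
    simp only [Set.mem_ofPred_eq, Language.Formula.realize_relabel]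
    have : (Sum.elim (fun a : (univ : Set N) => (a : N)) t) ∘ (Sum.elim
        (fun a : (univ : Set M) => Sum.inl ⟨UltraPower.mk fun _ => (a : M), mem_univ _⟩)
        ![Sum.inl ⟨UltraPower.mk s, mem_univ _⟩, Sum.inr 0]) =
        Sum.elim (fun a : (univ : Set M) => UltraPower.mk fun _ => (a : M)) ![UltraPower.mk s, t 0] := by
      ext i
      rcases i with i | i
      · rfl
      · fin_cases i <;> rfl
    rw [this]
    rfl
  have hQF := hmin N inferInstance UltraPower.elementarilyEquivalent A' hdef
  let u' : N := UltraPower.mk fun _ => u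
  let v' : N := UltraPower.mk fun _ => v
  have huv' : u' ≠ v' := by
    rw [ne_eq, UltraPower.mk_eq, Filter.eventually_const]
    exact huv
  have hnode : ∀ x : ℕ → M, (∀ n, x n ∈ node (interpC L M r) u v) →
      UltraPower.mk x ∈ node (interpC L N r) u' v' := by
    intro x hx
    change ¬ _
    rw [UltraPower.interpC_mk, ← Ultrafilter.eventually_not]
    exact Eventually.of_forall hx
  have hsame : ∀ x x' : ℕ → M, (∀ n, ¬ SameCone (interpC L M r) u v (x n) (x' n)) →
      ¬ SameCone (interpC L N r) u' v' (UltraPower.mk x) (UltraPower.mk x') := by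
    intro x x' hx
    unfold SameCone
    rw [UltraPower.interpC_mk, UltraPower.interpC_mk, ← Ultrafilter.eventually_or,
      ← Ultrafilter.eventually_not]
    exact Eventually.of_forall hx
  rcases hQF.decided_cofiniteCones hN huv' with hmem | hmem
  · obtain ⟨i, hi⟩ := exists_mem_of_mem_cofiniteCones hN hmem
      (z := fun i => UltraPower.mk fun _ => z i) (fun i => hnode _ fun _ => hz i)
      (fun i j hij => hsame _ _ fun _ => hzz i j hij)
    rw [hA'] at hi
    have hlarge : ∀ᶠ n in (hyperfilter ℕ : Filter ℕ), i ≤ n :=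
      (Nat.hyperfilter_le_atTop) (Filter.eventually_ge_atTop i)
    obtain ⟨n, hn, hin⟩ := (hi.and hlarge).exists
    exact hzA n i hin hn
  · obtain ⟨i, hi⟩ := exists_mem_of_mem_cofiniteCones hN hmem
      (z := fun i => UltraPower.mk fun n => y n i) (fun i => hnode _ fun n => hy n i)
      (fun i j hij => hsame _ _ fun n => hyy n i j hij)
    exact hi ((hA' _).2 (Eventually.of_forall fun n => hyA n i))

/-- A definable function of `x` near `e` cannot leave every cone of a closed ball while staying in
the ball. -/
theorem CMinimal.false_of_generic_in_node {r : L.Relations 3}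
    (hC : IsCRelation (interpC L M r)) (hmin : CMinimal L M r) {e s u v : M} (hs : s ≠ e)
    (huv : u ≠ v) {w : M → M} (hw : DF L fun t : Fin 1 → M => w (t 0))
    (hwB : ∀ᶠ x in near (interpC L M r) e, w x ∈ node (interpC L M r) u v)
    (hgen : ∀ t ∈ node (interpC L M r) u v,
      ∀ᶠ x in near (interpC L M r) e, ¬ SameCone (interpC L M r) u v t (w x)) : False := by
  have h := CR.of_isCRelation hC
  have hne := near_neBot hC hs
  have hseq : ∀ s', s' ≠ e → ∃ y : ℕ → M,
      (∀ i, y i ∈ node (interpC L M r) u v ∧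
        ∃ x, x ≠ e ∧ interpC L M r s' x e ∧ w x = y i) ∧
      ∀ i j, i < j → ¬ SameCone (interpC L M r) u v (y i) (y j) := by
    intro s' hs'
    refine exists_seq_of_forall_finset_exists
      (fun b => b ∈ node (interpC L M r) u v ∧ ∃ x, x ≠ e ∧ interpC L M r s' x e ∧ w x = b)
      (fun a b => ¬ SameCone (interpC L M r) u v a b) ?_
    intro F hF
    have h1 : ∀ᶠ x in near (interpC L M r) e, ∀ a ∈ F, ¬ SameCone (interpC L M r) u v a (w x) :=
      (Filter.eventually_all_finset F).2 fun a ha => hgen a (hF a ha).1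
    have h2 : ∀ᶠ x in near (interpC L M r) e, x ≠ e ∧ interpC L M r s' x e :=
      (mem_near h hs).2 ⟨s', hs', fun x hx hx' => ⟨hx, hx'⟩⟩
    obtain ⟨x, ⟨hx1, hx2⟩, hx3⟩ := ((h1.and h2).and hwB).exists
    exact ⟨w x, ⟨hx3, x, hx2.1, hx2.2, rfl⟩, hx1⟩
  obtain ⟨z, hz, hzz⟩ := hseq s hs
  have hsn : ∀ n : ℕ, ∃ s', s' ≠ e ∧ ∀ x, x ≠ e → interpC L M r s' x e →
      ∀ i ≤ n, ¬ SameCone (interpC L M r) u v (z i) (w x) := by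
    intro n
    exact (mem_near h hs).1 ((Filter.eventually_all_finite (Set.finite_Iic n)).2
      fun i _ => hgen (z i) (hz i).1)
  choose s' hs' hsz using hsn
  choose y hy hyy using fun n => hseq (s' n) (hs' n)
  refine hmin.uniform_cones h huv (s := s') (z := z) (y := y)
    (A := fun a => {b | ∃ x, x ≠ e ∧ interpC L M r a x e ∧
      (interpC L M r u b (w x) ∨ interpC L M r v b (w x))}) ?_ (fun i => (hz i).1) hzz ?_
    (fun n i => (hy n i).1) hyy ?_
  · refine DP.ex ((DP.ne (DF.var _) (DF.const e)).and
      ((DP.C r (DF.var _) (DF.var _) (DF.const e)).and ?_))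
    exact (DP.C r (DF.const u) (DF.var _) (DF.comp hw (DF.var _))).or
      (DP.C r (DF.const v) (DF.var _) (DF.comp hw (DF.var _)))
  · rintro n i hin ⟨x, hx, hsx, hzx⟩
    exact hsz n x hx hsx i hin hzx
  · intro n i
    obtain ⟨-, x, hx, hsx, hxy⟩ := hy n i
    exact ⟨x, hx, hsx, hxy ▸ SameCone.refl h huv _⟩

end

section

variable {L : FirstOrder.Language.{u, u}} [L.Structure M]

/-- A definable function of `x` near `e` with values in a cone has at most one limit index. -/
theorem limit_unique {r : L.Relations 3} (hC : IsCRelation (interpC L M r))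
    (hmin : CMinimal L M r) (hNB : NB L M r)
    (hqf : ∀ s : Set M, Set.Definable₁ (univ : Set M) L s → QFDef (interpC L M r) s)
    {e s p q : M} (hs : s ≠ e) {w : M → M} (hw : DF L fun t : Fin 1 → M => w (t 0))
    (hwU : ∀ᶠ x in near (interpC L M r) e, interpC L M r p (w x) q) {u v : M}
    (hu : interpC L M r p u q ∧ ∀ u', interpC L M r p u' q →
      ∀ᶠ x in near (interpC L M r) e, ¬ interpC L M r u u' (w x))
    (hv : interpC L M r p v q ∧ ∀ u', interpC L M r p u' q →
      ∀ᶠ x in near (interpC L M r) e, ¬ interpC L M r v u' (w x)) : u = v := by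
  have h := CR.of_isCRelation hC
  by_contra huv
  set T : Set M := {t | interpC L M r p t q ∧ ∀ u', interpC L M r p u' q →
    ∀ᶠ x in near (interpC L M r) e, ¬ interpC L M r t u' (w x)} with hTdef
  have hdec : ∀ a b, (∀ᶠ x in near (interpC L M r) e, interpC L M r a b (w x)) ∨
      ∀ᶠ x in near (interpC L M r) e, ¬ interpC L M r a b (w x) := fun a b =>
    (hqf {x | interpC L M r a b (w x)} (DP.C r (DF.const a) (DF.const b)
      (DF.comp hw (DF.var _)))).decided_near h hs
  have hT : Set.Definable₁ (univ : Set M) L T := by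
    refine (DP.C r (DF.const p) (DF.var _) (DF.const q)).and (DP.all
      ((DP.C r (DF.const p) (DF.var _) (DF.const q)).imp ?_))
    refine DP.congr (p := fun t : Fin 1 ⊕ Fin 1 → M => ∃ s', s' ≠ e ∧ ∀ x, x ≠ e →
      interpC L M r s' x e → ¬ interpC L M r (t (Sum.inl 0)) (t (Sum.inr 0)) (w x)) ?_
      fun t => (mem_near h hs).symm
    refine DP.ex ((DP.ne (DF.var _) (DF.const e)).and (DP.all
      ((DP.ne (DF.var _) (DF.const e)).imp
        ((DP.C r (DF.var _) (DF.var _) (DF.const e)).imp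
          (DP.C r (DF.var _) (DF.var _) (DF.comp hw (DF.var _))).not))))
  have hconv : BallConvex (interpC L M r) u T := by
    refine ⟨hu, fun a ha t ht => ?_⟩
    have htU : interpC L M r p t q := by
      have h1 := hu.1
      have h2 := ha.1
      grind [h.symm, h.asymm, h.split]
    refine ⟨htU, fun t' ht' => (hdec t t').resolve_left fun hev => ?_⟩
    have := near_neBot hC hs
    obtain ⟨x, ⟨hx1, hx2⟩, hx3⟩ := ((hev.and (hu.2 t' ht')).and (ha.2 t' ht')).exists
    grind [h.symm, h.asymm, h.split]
  have hout : ∀ z, z ∉ T → ∀ᶠ x in near (interpC L M r) e, interpC L M r z u (w x) := by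
    intro z hz
    by_cases hzU : interpC L M r p z q
    · have : ∃ u', interpC L M r p u' q ∧
          ¬ ∀ᶠ x in near (interpC L M r) e, ¬ interpC L M r z u' (w x) := by
        by_contra! hcon
        exact hz ⟨hzU, hcon⟩
      obtain ⟨u', hu', hzu'⟩ := this
      filter_upwards [(hdec z u').resolve_right hzu', hu.2 u' hu'] with x hx1 hx2
      grind [h.symm, h.asymm, h.split]
    · filter_upwards [hwU] with x hx
      have := hu.1
      grind [h.symm, h.asymm, h.split]
  have hpT : p ∉ T := fun hp => h.irrefl _ _ hp.1
  by_cases hcl : ∃ a ∈ T, T = {z | ¬ interpC L M r z u a}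
  · obtain ⟨a, ha, hTa⟩ := hcl
    have hTa' : ∀ z, z ∈ T ↔ ¬ interpC L M r z u a := fun z => Set.ext_iff.1 hTa z
    have hau : a ≠ u := by
      rintro rfl
      exact (hTa' v).1 hv (h.diag _ _ (Ne.symm huv))
    rcases (hqf {x | w x ∈ T} (DP.mem hT (DF.comp hw (DF.var _)))).decided_near h hs
      with hev | hev
    · refine hmin.false_of_generic_in_node hC hs hau.symm hw ?_ fun t ht => ?_
      · filter_upwards [hev] with x hx using (hTa' _).1 hx
      · have htT := (hTa' t).2 ht
        filter_upwards [hu.2 t htT.1, ha.2 t htT.1] with x hx1 hx2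
        exact not_or.2 ⟨hx1, hx2⟩
    · have hb : interpC L M r p u a := by
        by_contra hb
        exact hpT ((hTa' p).2 hb)
      refine (approach_closedBall h hqf hau hb).false hC hNB hqf hs hw ?_ fun z hz => ?_
      · filter_upwards [hev] with x hx
        by_contra hxT
        exact hx ((hTa' _).2 hxT)
      · exact hout z fun hzT => (hTa' z).1 hzT hz
  · obtain ⟨b, hb, hTb⟩ := ((hqf T hT).ball_of_convex h hconv hpT).resolve_left hcl
    have hTb' : ∀ z, z ∈ T ↔ interpC L M r b z u := fun z => Set.ext_iff.1 hTb z
    have hlim : ∀ t ∈ T, ∀ᶠ x in near (interpC L M r) e, interpC L M r (w x) u t := by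
      intro t ht
      obtain ⟨t', ht', htt'⟩ : ∃ t' ∈ T, interpC L M r t' u t := by
        by_contra! hcon
        exact hcl ⟨t, ht, Subset.antisymm hcon fun z hz => hconv.2 t ht z hz⟩
      filter_upwards [ht'.2 u hu.1] with x hx
      grind [h.symm, h.asymm, h.split]
    refine (approach_cone h hqf (Ne.symm huv) ((hTb' v).1 hv)).false hC hNB hqf hs hw ?_
      fun z hz => hlim z ((hTb' z).2 hz.1)
    filter_upwards [hout b hb, hlim u hu] with x hx1 hx2
    exact ⟨h.symm _ _ _ hx1, h.ne hx2⟩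

/-- A definable functional relation is the graph of the restriction of a definable function. -/
theorem DP.exists_fun {R : M → M → Prop} (hR : DP L fun t : Fin 2 → M => R (t 0) (t 1))
    (hfun : ∀ x y z, R x y → R x z → y = z) (e : M) :
    ∃ w : M → M, (DF L fun t : Fin 1 → M => w (t 0)) ∧ ∀ x y, R x y → w x = y := by
  classical
  let w : M → M := fun x => if hx : ∃ y, R x y then hx.choose else e
  have hw1 : ∀ x y, R x y → w x = y := fun x y hxy => by
    have hx : ∃ y, R x y := ⟨y, hxy⟩
    simp only [w, dif_pos hx]
    exact hfun x _ _ hx.choose_spec hxy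
  have hw2 : ∀ x, (¬ ∃ y, R x y) → w x = e := fun x hx => by simp only [w, dif_neg hx]
  refine ⟨w, DF.of_graph ?_, hw1⟩
  have hex : DP L fun t : Fin 2 → M => ∃ y, R (t 0) y :=
    DP.ex (DP.rel2 hR (DF.var _) (DF.var _))
  refine DP.congr (hR.or (hex.not.and (DP.eq (DF.var 1) (DF.const e)))) fun t => ?_
  by_cases hx : ∃ y, R (t 0) y
  · obtain ⟨y, hy⟩ := hx
    rw [hw1 _ _ hy]
    constructor
    · rintro (ht | ht)
      · exact hfun _ _ _ hy ht
      · exact absurd ⟨y, hy⟩ ht.1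
    · rintro rfl
      exact Or.inl hy
  · rw [hw2 _ hx]
    constructor
    · rintro (ht | ht)
      · exact absurd ⟨_, ht⟩ hx
      · exact ht.2.symm
    · exact fun ht => Or.inr ⟨hx, ht.symm⟩

end

/-- A property that holds near `e` holds on a cone around `e` inside a given one. -/
theorem exists_cone_of_near {C : M → M → M → Prop} (h : CR C) {a e : M} (ha : a ≠ e) {A : Set M}
    (hA : A ∈ near C e) :
    ∃ W : Set M, IsCone C W ∧ e ∈ W ∧ W ⊆ {x | C a x e} ∧ ∀ x ∈ W \ {e}, x ∈ A := by
  obtain ⟨v, hv, hvA⟩ := (mem_near h ha).1 hA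
  by_cases hav : C a v e
  · exact ⟨_, ⟨v, e, hv, rfl⟩, h.diag _ _ hv, fun x hx => h.mid hav hx,
      fun x hx => hvA x hx.2 hx.1⟩
  · refine ⟨_, ⟨a, e, ha, rfl⟩, h.diag _ _ ha, Subset.rfl, fun x hx => hvA x hx.2 ?_⟩
    have := hx.1
    simp only [Set.mem_ofPred_eq] at this
    grind [h.symm, h.asymm, h.split]

theorem NCeRel.eventually {C : M → M → M → Prop} (h : CR C) {V : Set M} {e : M} {f g k : M → M}
    (hN : NCeRel C V e f g k) : ∀ᶠ x in near C e, ¬ C (f x) (g x) (k x) := by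
  obtain ⟨W, ⟨c, d, hcd, rfl⟩, heW, -, hW⟩ := hN
  simp only [Set.mem_ofPred_eq] at heW
  have hce : c ≠ e := h.ne heW
  refine (mem_near h hce).2 ⟨c, hce, fun x hx hcx => hW x ⟨?_, hx⟩⟩
  simp only [Set.mem_ofPred_eq]
  grind [h.symm, h.asymm, h.split]

theorem statement12 {L : FirstOrder.Language.{u, u}} {M : Type u}
    [L.Structure M] (r : L.Relations 3)
    (hC : IsCRelation (interpC L M r))
    (hmin : CMinimal L M r)
    (hNB : NB L M r)
    (F : NiceFamily L M (interpC L M r))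
    (g : M → M) (hg : DefinableFunOn L M F.V g)
    (hgV : Set.MapsTo g F.V F.V) (hge : g F.e = F.e) :
    (∃ W : Set M, IsCone (interpC L M r) W ∧ F.e ∈ W ∧ W ⊆ F.V ∧
      ∀ u ∈ F.Tset g, ∀ v ∈ F.Tset g, ∀ x ∈ W,
        Delta (interpC L M r) (F.f u x) (F.f v x) (g x)) ∧
    (∀ u ∈ F.Tset g, (∃ a ∈ F.Tset g, ∃ b ∈ F.Tset g, a ≠ b) →
      ∃ W : Set M, IsCone (interpC L M r) W ∧ F.e ∈ W ∧ W ⊆ F.V ∧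
        ∀ z ∈ F.U \ F.Tset g, ∀ x ∈ W \ {F.e},
          interpC L M r (F.f z x) (F.f u x) (g x)) := by
  have h := CR.of_isCRelation hC
  have hqf : ∀ s : Set M, Set.Definable₁ (univ : Set M) L s → QFDef (interpC L M r) s :=
    hmin M inferInstance rfl
  obtain ⟨p, q, -, hU⟩ := F.coneU
  obtain ⟨a, b, -, hVab⟩ := F.coneV
  have he := F.he
  rw [hVab, Set.mem_ofPred_eq] at he
  have ha : a ≠ F.e := h.ne he
  have hU' : ∀ {u}, u ∈ F.U ↔ interpC L M r p u q := fun {u} => Set.ext_iff.1 hU u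
  have hV : F.V = {x | interpC L M r a x F.e} := by
    rw [hVab]
    ext x
    simp only [Set.mem_ofPred_eq]
    grind [h.symm, h.asymm, h.split]
  have hVnear : ∀ᶠ x in near (interpC L M r) F.e, x ∈ F.V \ {F.e} :=
    (mem_near h ha).2 ⟨a, ha, fun x hx hax => ⟨hV ▸ hax, hx⟩⟩
  have hgraph : DP L fun t : Fin 2 → M =>
      t 0 ∈ F.V \ {F.e} ∧ t 1 ∈ F.U ∧ F.f (t 1) (t 0) = g (t 0) := by
    refine DP.congr (p := fun t : Fin 2 → M => t 0 ≠ F.e ∧ ∃ y,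
      (t 1 ∈ F.U ∧ t 0 ∈ F.V ∧ F.f (t 1) (t 0) = y) ∧ (t 0 ∈ F.V ∧ g (t 0) = y)) ?_ fun t => ?_
    · refine (DP.ne (DF.var _) (DF.const F.e)).and (DP.ex (DP.and ?_ ?_))
      · exact DP.rel3 (p := fun x y z => x ∈ F.U ∧ y ∈ F.V ∧ F.f x y = z)
          F.definable (DF.var _) (DF.var _) (DF.var _)
      · exact DP.rel2 (p := fun x y => x ∈ F.V ∧ g x = y) hg (DF.var _) (DF.var _)
    · constructor
      · rintro ⟨h1, y, ⟨h2, h3, h4⟩, -, h5⟩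
        exact ⟨⟨h3, h1⟩, h2, h4.trans h5.symm⟩
      · rintro ⟨⟨h1, h2⟩, h3, h4⟩
        exact ⟨h2, _, ⟨h3, h1, h4⟩, h1, rfl⟩
  obtain ⟨w, hw, hwspec⟩ := DP.exists_fun
    (R := fun x y => x ∈ F.V \ {F.e} ∧ y ∈ F.U ∧ F.f y x = g x) hgraph (by
      rintro x y z ⟨hx, hy, hy'⟩ ⟨-, hz, hz'⟩
      obtain ⟨V', -, -, hiso⟩ := F.star x hx
      exact hiso.1.injOn hy hz (hy'.trans hz'.symm)) F.e
  rcases (hqf {x | ∃ y, x ∈ F.V \ {F.e} ∧ y ∈ F.U ∧ F.f y x = g x}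
    (DP.ex (DP.rel2 (p := fun x y => x ∈ F.V \ {F.e} ∧ y ∈ F.U ∧ F.f y x = g x) hgraph
      (DF.var _) (DF.var _)))).decided_near h ha with hev | hev
  · have hwev : ∀ᶠ x in near (interpC L M r) F.e,
        x ∈ F.V \ {F.e} ∧ w x ∈ F.U ∧ F.f (w x) x = g x := by
      filter_upwards [hev] with x hx
      obtain ⟨y, hy⟩ := hx
      rw [hwspec x y hy]
      exact hy
    have hlim : ∀ u ∈ F.Tset g, interpC L M r p u q ∧ ∀ u', interpC L M r p u' q →
        ∀ᶠ x in near (interpC L M r) F.e, ¬ interpC L M r u u' (w x) := by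
      rintro u ⟨hu, htan⟩
      refine ⟨hU'.1 hu, fun u' hu' => ?_⟩
      filter_upwards [(htan u' (hU'.2 hu')).eventually h, hwev] with x hx ⟨hxV, hwx, hwg⟩
      obtain ⟨V', -, -, hiso⟩ := F.star x hxV
      rw [← hwg] at hx
      exact fun hc => hx ((hiso.2 u hu u' (hU'.2 hu') (w x) hwx).1 hc)
    have hsub : ∀ u ∈ F.Tset g, ∀ v ∈ F.Tset g, u = v := fun u hu v hv =>
      limit_unique hC hmin hNB hqf ha hw (hwev.mono fun x hx => hU'.1 hx.2.1) (hlim u hu)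
        (hlim v hv)
    refine ⟨⟨F.V, F.coneV, F.he, Subset.rfl, fun u hu v hv x _ => ?_⟩, ?_⟩
    · rw [hsub u hu v hv]
      exact ⟨h.irrefl _ _, h.irrefl _ _⟩
    · rintro u - ⟨t, ht, t', ht', hne⟩
      exact absurd (hsub t ht t' ht') hne
  · have hall : ∀ᶠ x in near (interpC L M r) F.e, ∀ u ∈ F.U, ∀ v ∈ F.U,
        ¬ interpC L M r (F.f u x) (F.f v x) (g x) := by
      filter_upwards [hev, hVnear] with x hx hxV u hu v hv
      obtain ⟨V', -, ⟨c, d, -, hV'⟩, hiso⟩ := F.star x hxV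
      have hmem : ∀ y, y ∈ V' ↔ interpC L M r c y d := fun y => Set.ext_iff.1 hV' y
      have h1 := (hmem _).1 (hiso.1.mapsTo hu)
      have h2 := (hmem _).1 (hiso.1.mapsTo hv)
      have h3 : ¬ interpC L M r c (g x) d := fun h3 => by
        obtain ⟨y, hy, hyx⟩ := hiso.1.surjOn ((hmem _).2 h3)
        exact hx ⟨y, hxV, hy, hyx⟩
      grind [h.symm, h.asymm, h.split]
    obtain ⟨W, hWc, heW, hWV, hW⟩ := exists_cone_of_near h ha hall
    rw [← hV] at hWV
    refine ⟨⟨W, hWc, heW, hWV, fun u hu v hv x hx => ?_⟩, fun u hu _ =>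
      ⟨W, hWc, heW, hWV, fun z hz => absurd ?_ hz.2⟩⟩
    · by_cases hxe : x = F.e
      · rw [hxe, F.fixe u hu.1, F.fixe v hv.1, hge]
        exact ⟨h.irrefl _ _, h.irrefl _ _⟩
      · exact ⟨hW x ⟨hx, hxe⟩ u hu.1 v hv.1, hW x ⟨hx, hxe⟩ v hv.1 u hu.1⟩
    · exact ⟨hz.1, fun u' hu' => ⟨W, hWc, heW, hWV, fun x hx => hW x hx z hz.1 u' hu'⟩⟩

end CMinPaper
end

section
/- Let M be a C-minimal, definably maximal structure, F = {f_u : u ∈ U} a nice family of functions with domain V and absorbing element e, and g : V → V a definable function with g(e) = e which is derivable relative to F. Then ψ_{F,g} is defined on W∖{e} for some cone W containing e, and for u₁ ∈ U: f_{u₁} ∼ g if and only if lim_{x→e} ψ_{F,g}(x) = u₁. -/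
open FirstOrder Set

universe u

namespace CMinPaper

variable {M : Type u}

section CRelation

variable {C : M → M → M → Prop}

/-- In a C-relation `C x y y` holds as soon as `x ≠ y`. -/
theorem IsCRelation.of_ne (hC : IsCRelation C) {x y : M} (h : x ≠ y) : C x y y := by
  obtain ⟨h1, h2, h3, h4⟩ := hC
  obtain ⟨z, -, hz⟩ := h4 x y h
  grind

theorem IsCRelation.ne (hC : IsCRelation C) {x y z : M} (h : C x y z) : x ≠ y := by
  obtain ⟨h1, h2, h3, h4⟩ := hC
  grind

/-- The basic cones around `e`. -/
theorem isCone_setOf {a e : M} (h : a ≠ e) : IsCone C {x | C a x e} := ⟨a, e, h, rfl⟩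

/-- Two cones with a common point are nested. -/
theorem IsCone.subset_or_subset (hC : IsCRelation C) {S T : Set M} (hS : IsCone C S)
    (hT : IsCone C T) {e : M} (heS : e ∈ S) (heT : e ∈ T) : S ⊆ T ∨ T ⊆ S := by
  obtain ⟨a, b, hab, rfl⟩ := hS
  obtain ⟨c, d, hcd, rfl⟩ := hT
  obtain ⟨h1, h2, h3, h4⟩ := hC
  by_contra hcon
  simp only [not_or, Set.not_subset, mem_ofPred_eq] at *
  obtain ⟨⟨x, hx, hx'⟩, ⟨y, hy, hy'⟩⟩ := hcon
  grind

/-- The intersection of two cones with a common point is a cone. -/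
theorem IsCone.inter (hC : IsCRelation C) {S T : Set M} (hS : IsCone C S)
    (hT : IsCone C T) {e : M} (heS : e ∈ S) (heT : e ∈ T) : IsCone C (S ∩ T) := by
  rcases hS.subset_or_subset hC hT heS heT with h | h
  · rwa [inter_eq_left.2 h]
  · rwa [inter_eq_right.2 h]

/-- Cones have no isolated points. -/
theorem IsCone.exists_ne (hC : IsCRelation C) {S : Set M} (hS : IsCone C S) {e : M}
    (he : e ∈ S) : ∃ x ∈ S, x ≠ e := by
  obtain ⟨a, b, hab, rfl⟩ := hS
  obtain ⟨z, hz, hz'⟩ := hC.2.2.2 a e (hC.ne he)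
  refine ⟨z, ?_, hz⟩
  obtain ⟨h1, h2, h3, h4⟩ := hC
  simp only [mem_ofPred_eq] at *
  grind

/-- A cone containing `p` and `q` contains every point closer to `p` than `q` is. -/
theorem IsCone.mem_of_C (hC : IsCRelation C) {S : Set M} (hS : IsCone C S) {p q y : M}
    (hp : p ∈ S) (hq : q ∈ S) (h : C q p y) : y ∈ S := by
  obtain ⟨a, b, hab, rfl⟩ := hS
  obtain ⟨h1, h2, h3, h4⟩ := hC
  simp only [mem_ofPred_eq] at *
  grind

/-- Distinct points are separated by disjoint cones. -/
theorem IsCRelation.exists_disjoint_cones (hC : IsCRelation C) {x y : M} (h : x ≠ y) :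
    ∃ S T : Set M, IsCone C S ∧ IsCone C T ∧ x ∈ S ∧ y ∈ T ∧ Disjoint S T := by
  refine ⟨_, _, isCone_setOf h.symm, isCone_setOf h, hC.of_ne h.symm, hC.of_ne h, ?_⟩
  rw [Set.disjoint_left]
  intro z hz hz'
  exact hC.2.1 _ _ _ (hC.1 _ _ _ hz) (hC.1 _ _ _ hz')

/-- The germ of `S` at the punctured point `e` is constant. -/
def HasConstantGerm (C : M → M → M → Prop) (e : M) (S : Set M) : Prop :=
  ∃ W : Set M, IsCone C W ∧ e ∈ W ∧ ((∀ x ∈ W \ {e}, x ∈ S) ∨ ∀ x ∈ W \ {e}, x ∉ S)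

theorem HasConstantGerm.compl {e : M} {S : Set M} (h : HasConstantGerm C e S) :
    HasConstantGerm C e Sᶜ := by
  obtain ⟨W, hW, he, h⟩ := h
  refine ⟨W, hW, he, h.symm.imp id fun h x hx hx' => hx' (h x hx)⟩

theorem HasConstantGerm.union (hC : IsCRelation C) {e : M} {S T : Set M}
    (hS : HasConstantGerm C e S) (hT : HasConstantGerm C e T) :
    HasConstantGerm C e (S ∪ T) := by
  obtain ⟨W, hW, he, h⟩ := hS
  obtain ⟨W', hW', he', h'⟩ := hT
  refine ⟨W ∩ W', hW.inter hC hW' he he', ⟨he, he'⟩, ?_⟩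
  rcases h with h | h
  · exact Or.inl fun x hx => Or.inl (h x ⟨hx.1.1, hx.2⟩)
  rcases h' with h' | h'
  · exact Or.inl fun x hx => Or.inr (h' x ⟨hx.1.2, hx.2⟩)
  · exact Or.inr fun x hx => not_or.2 ⟨h x ⟨hx.1.1, hx.2⟩, h' x ⟨hx.1.2, hx.2⟩⟩

theorem hasConstantGerm_of_forall {e : M} (S : Set M) (W : Set M) (hW : IsCone C W) (he : e ∈ W)
    (h : ∀ x ∈ W, x ≠ e → (x ∈ S ↔ e ∈ S)) : HasConstantGerm C e S := by
  refine ⟨W, hW, he, ?_⟩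
  by_cases h' : e ∈ S
  · exact Or.inl fun x hx => (h x hx.1 hx.2).2 h'
  · exact Or.inr fun x hx hx' => h' ((h x hx.1 hx.2).1 hx')

theorem hasConstantGerm_const (hC : IsCRelation C) {e a : M} (ha : a ≠ e) (p : Prop) :
    HasConstantGerm C e {_x : M | p} :=
  hasConstantGerm_of_forall _ _ (isCone_setOf ha) (hC.of_ne ha) fun _ _ _ => Iff.rfl

theorem hasConstantGerm_eq (hC : IsCRelation C) {e a : M} (ha : a ≠ e) (b : M) :
    HasConstantGerm C e {x | x = b} := by
  by_cases hb : b = e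
  · subst hb
    exact ⟨_, isCone_setOf ha, hC.of_ne ha, Or.inr fun x hx => hx.2⟩
  · refine ⟨_, isCone_setOf hb, hC.of_ne hb, Or.inr fun x hx hx' => ?_⟩
    exact hC.ne hx.1 hx'.symm

/-- Closed balls and their complements are open away from their centre. -/
theorem hasConstantGerm_C_left (hC : IsCRelation C) {e a : M} (ha : a ≠ e) (b c : M) :
    HasConstantGerm C e {x | C x b c} := by
  by_cases hbc : b = c
  · subst hbc
    have : {x | C x b b} = {x | x = b}ᶜ := by
      ext x
      exact ⟨fun h => hC.ne h, fun h => hC.of_ne h⟩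
    rw [this]
    exact (hasConstantGerm_eq hC ha b).compl
  wlog hb : b ≠ e generalizing b c
  · have hswap : {x | C x b c} = {x | C x c b} := by
      ext x
      exact ⟨hC.1 _ _ _, hC.1 _ _ _⟩
    rw [hswap]
    exact this c b (Ne.symm hbc) (by grind)
  refine hasConstantGerm_of_forall _ _ (isCone_setOf hb) (hC.of_ne hb) fun x hx _ => ?_
  obtain ⟨h1, h2, h3, h4⟩ := hC
  simp only [mem_ofPred_eq] at *
  grind

theorem hasConstantGerm_C_middle (hC : IsCRelation C) {e a : M} (ha : a ≠ e) (b c : M) :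
    HasConstantGerm C e {x | C b x c} := by
  by_cases hbc : b = c
  · subst hbc
    convert hasConstantGerm_const hC ha False using 3
    exact iff_false_intro fun h => hC.ne (hC.1 _ _ _ h) rfl
  by_cases hc : c = e
  · subst hc
    refine hasConstantGerm_of_forall _ _ (isCone_setOf hbc) (hC.of_ne hbc) fun x hx _ => ?_
    exact iff_of_true hx (hC.of_ne hbc)
  refine hasConstantGerm_of_forall _ _ (isCone_setOf hc) (hC.of_ne hc) fun x hx _ => ?_
  obtain ⟨h1, h2, h3, h4⟩ := hC
  simp only [mem_ofPred_eq] at *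
  grind

/-- Quantifier-free definable sets have constant germs at every point. -/
theorem QFDef.hasConstantGerm (hC : IsCRelation C) {e a : M} (ha : a ≠ e) {S : Set M}
    (hS : QFDef C S) : HasConstantGerm C e S := by
  have hirr : ∀ x y, ¬ C x x y := fun x y h => hC.ne h rfl
  have hirr' : ∀ x y, ¬ C x y x := fun x y h => hC.ne (hC.1 _ _ _ h) rfl
  have hswap : ∀ x y z, C x y z ↔ C x z y := fun x y z => ⟨hC.1 _ _ _, hC.1 _ _ _⟩
  have hdiag : ∀ x y, C x y y ↔ ¬ y = x := fun x y =>
    ⟨fun h => (hC.ne h).symm, fun h => hC.of_ne (Ne.symm h)⟩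
  induction hS with
  | atomC t₁ t₂ t₃ =>
    rcases t₁ with _ | t₁ <;> rcases t₂ with _ | t₂ <;> rcases t₃ with _ | t₃ <;>
      simp only [Option.getD_none, Option.getD_some, hirr, hirr']
    iterate 3 exact hasConstantGerm_const hC ha _
    · exact hasConstantGerm_C_left hC ha _ _
    · simp only [hdiag]
      exact (hasConstantGerm_eq hC ha t₁).compl
    · exact hasConstantGerm_C_middle hC ha _ _
    · simp only [hswap t₁ t₂]
      exact hasConstantGerm_C_middle hC ha _ _
    · exact hasConstantGerm_const hC ha _
  | atomEq t₁ t₂ =>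
    rcases t₁ with _ | t₁ <;> rcases t₂ with _ | t₂ <;>
      simp only [Option.getD_none, Option.getD_some]
    · exact hasConstantGerm_const hC ha _
    · exact hasConstantGerm_eq hC ha _
    · simp only [eq_comm (a := t₁)]
      exact hasConstantGerm_eq hC ha _
    · exact hasConstantGerm_const hC ha _
  | compl _ ih => exact ih.compl
  | union _ _ ih ih' => exact ih.union hC ih'

end CRelation

section Definability

variable {L : FirstOrder.Language.{u, u}} [L.Structure M]

theorem definable_interpC (r : L.Relations 3) :
    Set.Definable (univ : Set M) L {t : Fin 3 → M | interpC L M r (t 0) (t 1) (t 2)} := by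
  refine Set.Definable.mono (A := ∅) (Set.empty_definable_iff.2
    ⟨r.formula ![Language.Term.var 0, Language.Term.var 1, Language.Term.var 2], ?_⟩)
    (empty_subset _)
  ext t
  simp only [mem_ofPred_eq, interpC, Language.Formula.realize_rel]
  apply iff_of_eq
  congr 1
  ext i
  fin_cases i <;> rfl

/-- The set where two members of a nice family and a definable function are in relation `C`. -/
theorem NiceFamily.definable_setOf_C {r : L.Relations 3} (F : NiceFamily L M (interpC L M r))
    {g : M → M} (hg : DefinableFunOn L M F.V g) {u v : M} (hu : u ∈ F.U) (hv : v ∈ F.U) :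
    Set.Definable₁ (univ : Set M) L
      {x | x ∈ F.V ∧ interpC L M r (F.f u x) (F.f v x) (g x)} := by
  have hfu := F.definable.preimage_comp (![4, 0, 1] : Fin 3 → Fin 6)
  have hfv := F.definable.preimage_comp (![5, 0, 2] : Fin 3 → Fin 6)
  have hgx := Set.Definable.preimage_comp (![0, 3] : Fin 2 → Fin 6) hg
  have hrel := (definable_interpC (M := M) r).preimage_comp (![1, 2, 3] : Fin 3 → Fin 6)
  have hpu := Set.Definable.preimage_comp (![4] : Fin 1 → Fin 6)
    (Set.Definable.singleton_of_mem L (mem_univ u))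
  have hpv := Set.Definable.preimage_comp (![5] : Fin 1 → Fin 6)
    (Set.Definable.singleton_of_mem L (mem_univ v))
  have key := (((((hfu.inter hfv).inter hgx).inter hrel).inter hpu).inter hpv).image_comp
    (![0] : Fin 1 → Fin 6)
  unfold Set.Definable₁
  convert key using 1
  ext t
  simp only [mem_ofPred_eq, mem_image, mem_inter_iff, mem_preimage, Function.comp_apply,
    Matrix.cons_val, mem_singleton_iff]
  constructor
  · rintro ⟨hV, h⟩
    refine ⟨![t 0, F.f u (t 0), F.f v (t 0), g (t 0), u, v], ?_, ?_⟩
    · simp [hu, hv, hV, h]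
    · ext i
      fin_cases i
      rfl
  · rintro ⟨s, ⟨⟨⟨⟨⟨⟨-, hV, h1⟩, ⟨-, -, h2⟩⟩, ⟨-, h3⟩⟩, h⟩, rfl⟩, rfl⟩, rfl⟩
    simp only [Function.comp_apply, Matrix.cons_val]
    rw [h1, h2, h3]
    exact ⟨hV, h⟩

end Definability

section Tangent

variable {L : FirstOrder.Language.{u, u}} [L.Structure M] {r : L.Relations 3}

/-- In a C-minimal structure, if `(¬C)_e(f_u, f_v, g)` fails then `C_e(f_u, f_v, g)` holds. -/
theorem NiceFamily.ceRel_of_not_nCeRel (hC : IsCRelation (interpC L M r))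
    (hmin : CMinimal L M r) (F : NiceFamily L M (interpC L M r)) {g : M → M}
    (hg : DefinableFunOn L M F.V g) {u v : M} (hu : u ∈ F.U) (hv : v ∈ F.U)
    (h : ¬ NCeRel (interpC L M r) F.V F.e (F.f u) (F.f v) g) :
    CeRel (interpC L M r) F.V F.e (F.f u) (F.f v) g := by
  obtain ⟨a, -, ha⟩ := F.coneV.exists_ne hC F.he
  obtain ⟨W, hW, he, hW'⟩ := (hmin M inferInstance rfl _
    (F.definable_setOf_C hg hu hv)).hasConstantGerm hC ha
  rcases hW' with hW' | hW'
  · exact ⟨W ∩ F.V, hW.inter hC F.coneV he F.he, ⟨he, F.he⟩, inter_subset_right,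
      fun x hx => (hW' x ⟨hx.1.1, hx.2⟩).2⟩
  · exact absurd ⟨W ∩ F.V, hW.inter hC F.coneV he F.he, ⟨he, F.he⟩, inter_subset_right,
      fun x hx hx' => hW' x ⟨hx.1.1, hx.2⟩ ⟨hx.1.2, hx'⟩⟩ h

/-- A tangent is strictly closer to `g` than any non-tangent member of the family. -/
theorem NiceFamily.Tangent.ceRel (hC : IsCRelation (interpC L M r))
    (hmin : CMinimal L M r) {F : NiceFamily L M (interpC L M r)} {g : M → M}
    (hg : DefinableFunOn L M F.V g) {u v : M} (hu : F.Tangent u g) (hv : v ∈ F.U)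
    (hvg : ¬ F.Tangent v g) : CeRel (interpC L M r) F.V F.e (F.f v) (F.f u) g := by
  have hw : ∃ w ∈ F.U, ¬ NCeRel (interpC L M r) F.V F.e (F.f v) (F.f w) g := by
    by_contra! hcon
    exact hvg ⟨hv, hcon⟩
  obtain ⟨w, hw, hvw⟩ := hw
  obtain ⟨W, hW, he, hWV, h⟩ := F.ceRel_of_not_nCeRel hC hmin hg hv hw hvw
  obtain ⟨W', hW', he', -, h'⟩ := hu.2 w hw
  refine ⟨W ∩ W', hW.inter hC hW' he he', ⟨he, he'⟩, inter_subset_left.trans hWV, fun x hx => ?_⟩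
  exact (hC.2.2.1 _ _ _ (F.f u x) (h x ⟨hx.1.1, hx.2⟩)).resolve_right (h' x ⟨hx.1.2, hx.2⟩)

/-- If `g` is derivable with tangent `f_u`, then `g x` is reached by the family at an index
tending to `u`. -/
theorem NiceFamily.Tangent.exists_cone (hC : IsCRelation (interpC L M r))
    (hmin : CMinimal L M r) {F : NiceFamily L M (interpC L M r)} {g : M → M}
    (hg : DefinableFunOn L M F.V g) (hder : F.Derivable g) {u : M} (hu : F.Tangent u g)
    {A : Set M} (hA : IsCone (interpC L M r) A) (huA : u ∈ A) :
    ∃ W : Set M, IsCone (interpC L M r) W ∧ F.e ∈ W ∧ W ⊆ F.V ∧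
      ∀ x ∈ W \ {F.e}, ∃ v : M, v ∈ F.U ∧ v ∈ A ∧ F.f v x = g x ∧
        ∀ u' ∈ F.U, F.f u' x = g x → u' = v := by
  obtain ⟨w, ⟨hwA, hwU⟩, hwu⟩ :=
    (hA.inter hC F.coneU huA hu.1).exists_ne hC ⟨huA, hu.1⟩
  obtain ⟨W, hW, he, hWV, h⟩ := hu.ceRel hC hmin hg hwU fun hw => hwu (hder.unique hw hu)
  refine ⟨W, hW, he, hWV, fun x hx => ?_⟩
  obtain ⟨V', -, hV', hbij, hiso⟩ := F.star x ⟨hWV hx.1, hx.2⟩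
  obtain ⟨v, hv, hvx⟩ := hbij.surjOn
    (hV'.mem_of_C hC (hbij.mapsTo hu.1) (hbij.mapsTo hwU) (h x hx))
  refine ⟨v, hv, ?_, hvx, fun u' hu' h' => hbij.injOn hu' hv (h'.trans hvx.symm)⟩
  have hC' := h x hx
  rw [← hvx] at hC'
  exact hA.mem_of_C hC huA hwA ((hiso w hwU u hu.1 v hv).2 hC')

end Tangent

theorem statement14 {L : FirstOrder.Language.{u, u}} {M : Type u}
    [L.Structure M] (r : L.Relations 3)
    (hC : IsCRelation (interpC L M r))
    (hmin : CMinimal L M r)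
    (hmax : DefinablyMaximal L M r)
    (F : NiceFamily L M (interpC L M r))
    (g : M → M) (hg : DefinableFunOn L M F.V g)
    (hgV : Set.MapsTo g F.V F.V) (hge : g F.e = F.e)
    (hder : F.Derivable g) :
    (∃ W : Set M, IsCone (interpC L M r) W ∧ F.e ∈ W ∧ W ⊆ F.V ∧
      ∀ x ∈ W \ {F.e}, ∃! u : M, u ∈ F.U ∧ F.f u x = g x) ∧
    (∀ u₁ ∈ F.U, (F.Tangent u₁ g ↔
      ∀ A : Set M, IsCone (interpC L M r) A → u₁ ∈ A →
        ∃ W : Set M, IsCone (interpC L M r) W ∧ F.e ∈ W ∧ W ⊆ F.V ∧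
          ∀ x ∈ W \ {F.e}, ∃ u : M, u ∈ F.U ∧ u ∈ A ∧ F.f u x = g x ∧
            ∀ u' ∈ F.U, F.f u' x = g x → u' = u)) := by
  obtain ⟨u, hu, -⟩ := id hder
  have hlim := fun A hA huA => hu.exists_cone hC hmin hg hder (A := A) hA huA
  refine ⟨?_, fun u₁ _ => ⟨fun h A hA huA => h.exists_cone hC hmin hg hder hA huA, fun h => ?_⟩⟩
  · obtain ⟨W, hW, he, hWV, h⟩ := hlim F.U F.coneU hu.1
    refine ⟨W, hW, he, hWV, fun x hx => ?_⟩
    obtain ⟨v, hv, -, hvx, huniq⟩ := h x hx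
    exact ⟨v, ⟨hv, hvx⟩, fun y hy => huniq y hy.1 hy.2⟩
  · by_cases huu : u₁ = u
    · rwa [huu]
    obtain ⟨S, T, hS, hT, huS, huT, hST⟩ := hC.exists_disjoint_cones huu
    obtain ⟨W, hW, he, -, h⟩ := h S hS huS
    obtain ⟨W', hW', he', -, h'⟩ := hlim T hT huT
    obtain ⟨x, hx, hxe⟩ := (hW.inter hC hW' he he').exists_ne hC ⟨he, he'⟩
    obtain ⟨v, hvU, hvS, hvx, -⟩ := h x ⟨hx.1, hxe⟩
    obtain ⟨w, -, hwT, -, huniq⟩ := h' x ⟨hx.2, hxe⟩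
    exact absurd (huniq v hvU hvx ▸ hwT) (Set.disjoint_left.1 hST hvS)

end CMinPaper
end
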